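/- arXiv:0902.4723 — 2 statements merged into one kernel-verified Lean document; each statement's English description precedes it below -/
import Mathlib

section
/- The uniform halting problem, i.e. the set of codes of Turing machines M that halt on every configuration, is Π⁰₂-complete. -/
/-!
The set is `Π⁰₂` because a valid configuration has a finite code on which machine steps are primitive
recursive: a well-formed machine halts everywhere iff for every code of a valid configuration there
is a number of steps after which the run has stopped (`pi02_uniform`).

For hardness, the difficulty is that a machine has to halt on *all* configurations, including those
that are not reachable from any sensible start. Let `B = {n | ∀ x, ∃ y, p n x y}` with `p`
computable. Replacing the search for `y` by the stages of a partial recursive function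
(`exists_stages`) gives a primitive recursive `q`, increasing in `t`, with
`n ∈ B ↔ ∀ x, ∃ t, q n x t ≠ 0`. The program `searcher c n` on a counter machine repeats for ever:
reset register `0` to `n`, increase `t` in register `2`, compute `q n x t` where `x` is the content
of register `1`, and stop if the result is nonzero. Here `q` is computed by a LOOP program `c`
(`Prog.exists_computes`). LOOP programs end even if they are entered in the middle with arbitrary
register contents (`Prog.reach_exit`), and since `q` is increasing, the search succeeds from
wherever `t` starts. So if `n ∈ B` then the counter machine stops from all labels and all register
contents (`searcher_stops`), and if `x` has no witness then it runs for ever once register `1` holds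
`x`.

It remains to simulate counter machines by Turing machines so that garbage on the tape does no harm.
A maximal block of non-blank cells stands for the registers: the content of register `r` is the
number of cells in the block holding the symbol `r + 2`. Every maximal block is therefore a
legitimate memory. Increments are written on the first blank to the right; decrements search the
block from its left end (`simulate`). The block may grow until it touches garbage further right and
swallows it, which changes the simulated registers, but this happens only finitely often because the
tape is finite; after the last time, the simulation is faithful and the Turing machine halts if the
counter machine does so universally (`halts_of_start`, `halts_all`). On a tape without garbage the
simulation is always faithful, so a nonterminating counter machine gives a nonterminating Turing
machine (`not_halts`). The machine code is a computable function of `n`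
(`primrec_encode_machine`).
-/


/-- A (deterministic) Turing machine, presented concretely: a finite list of
states `Q`, a finite tape alphabet `Γ`, a designated blank symbol, an initial
state, and a finite list representing the graph of the partial transition
function `δ : Q × Γ ⇀ Q × Γ × {L,R}` (`false` codes `L`, `true` codes `R`). -/
structure TM where
  states : List ℕ
  alphabet : List ℕ
  blank : ℕ
  start : ℕ
  delta : List ((ℕ × ℕ) × (ℕ × ℕ × Bool))

/-- Well-formedness of a Turing machine description: the blank belongs to the
alphabet, the initial state is a state, all transition entries are well-typed,
and the transition list is functional (the machine is deterministic). -/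
def WFTM (M : TM) : Prop :=
  M.blank ∈ M.alphabet ∧ M.start ∈ M.states ∧
  (∀ e ∈ M.delta, e.1.1 ∈ M.states ∧ e.1.2 ∈ M.alphabet ∧
      e.2.1 ∈ M.states ∧ e.2.2.1 ∈ M.alphabet) ∧
  (∀ e ∈ M.delta, ∀ e' ∈ M.delta, e.1 = e'.1 → e.2 = e'.2)

/-- A configuration of a Turing machine: a current state together with the
tape content. -/
def Config : Type := ℕ × (ℤ → ℕ)

/-- Valid configurations of `M`: the state belongs to `Q`, the tape is
`Γ`-valued, and the tape is blank at all but finitely many positions. -/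
def ValidConfig (M : TM) (c : Config) : Prop :=
  c.1 ∈ M.states ∧ (∀ n : ℤ, c.2 n ∈ M.alphabet) ∧
    Set.Finite {n : ℤ | c.2 n ≠ M.blank}

/-- The step relation `→_M` on configurations: `(q, tape) →_M (q', tape')` iff
either `δ(q, tape 0) = (q', f, L)`, `tape' 1 = f` and `tape' (n+1) = tape n`
for all `n ≠ 0`, or `δ(q, tape 0) = (q', f, R)`, `tape' (-1) = f` and
`tape' (n-1) = tape n` for all `n ≠ 0`. -/
def TMStep (M : TM) (c c' : Config) : Prop :=
  (∃ f : ℕ, ((c.1, c.2 0), (c'.1, f, false)) ∈ M.delta ∧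
      c'.2 1 = f ∧ ∀ n : ℤ, n ≠ 0 → c'.2 (n + 1) = c.2 n) ∨
  (∃ f : ℕ, ((c.1, c.2 0), (c'.1, f, true)) ∈ M.delta ∧
      c'.2 (-1) = f ∧ ∀ n : ℤ, n ≠ 0 → c'.2 (n - 1) = c.2 n)

/-- `M` halts on configuration `c`: some finite sequence of `→_M`-steps from
`c` reaches a configuration to which no transition applies. -/
def HaltsOn (M : TM) (c : Config) : Prop :=
  ∃ c' : Config, Relation.ReflTransGen (TMStep M) c c' ∧ ∀ c'' : Config, ¬ TMStep M c' c''

/-- An injective code of a Turing machine description. -/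
def encodeTM (M : TM) : ℕ :=
  Encodable.encode (M.states, M.alphabet, M.blank, M.start, M.delta)

/-- A set `A ⊆ ℕ` is Π⁰₂ if there is a decidable (computable) predicate
`P ⊆ ℕ³` with `n ∈ A ↔ ∀ x ∃ y, P n x y`. -/
def Pi02 (A : Set ℕ) : Prop :=
  ∃ p : ℕ → ℕ → ℕ → Bool,
    Computable (fun x : ℕ × ℕ × ℕ => p x.1 x.2.1 x.2.2) ∧
    ∀ n : ℕ, n ∈ A ↔ ∀ x : ℕ, ∃ y : ℕ, p n x y = true

/-- `B` is many-one reducible to `A`: there is a total computable `g` with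
`n ∈ B ↔ g n ∈ A` for all `n`. -/
def ManyOneRed (B A : Set ℕ) : Prop :=
  ∃ g : ℕ → ℕ, Computable g ∧ ∀ n : ℕ, n ∈ B ↔ g n ∈ A

/-- `A` is Π⁰₂-complete. -/
def Pi02Complete (A : Set ℕ) : Prop :=
  Pi02 A ∧ ∀ B : Set ℕ, Pi02 B → ManyOneRed B A

namespace UniformHalting

/-! ### Runs of a Turing machine -/

/-- A configuration presented by an absolute tape `T` and a head position `h`. -/
def conf (q : ℕ) (T : ℤ → ℕ) (h : ℤ) : Config := (q, fun n => T (n + h))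

theorem conf_step_right {M : TM} {q q' f : ℕ} {T : ℤ → ℕ} {h : ℤ}
    (hd : ((q, T h), (q', f, true)) ∈ M.delta) :
    TMStep M (conf q T h) (conf q' (Function.update T h f) (h + 1)) := by
  refine Or.inr ⟨f, by simpa [conf] using hd, by simp [conf], fun n hn => ?_⟩
  have e : n - 1 + (h + 1) = n + h := by ring
  simp [conf, e, Function.update_apply, hn]

theorem conf_step_left {M : TM} {q q' f : ℕ} {T : ℤ → ℕ} {h : ℤ}
    (hd : ((q, T h), (q', f, false)) ∈ M.delta) :
    TMStep M (conf q T h) (conf q' (Function.update T h f) (h - 1)) := by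
  refine Or.inl ⟨f, by simpa [conf] using hd, by simp [conf], fun n hn => ?_⟩
  have e : n + 1 + (h - 1) = n + h := by ring
  simp [conf, e, Function.update_apply, hn]

theorem step_det {M : TM} (hM : WFTM M) {c c₁ c₂ : Config}
    (h₁ : TMStep M c c₁) (h₂ : TMStep M c c₂) : c₁ = c₂ := by
  have key := hM.2.2.2
  rcases h₁ with ⟨f, hf, a, b⟩ | ⟨f, hf, a, b⟩ <;>
    rcases h₂ with ⟨g, hg, a', b'⟩ | ⟨g, hg, a', b'⟩ <;>
    have := key _ hf _ hg rfl <;> simp only [Prod.mk.injEq] at this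
  · refine Prod.ext this.1 (funext fun n => ?_)
    by_cases hn : n = 1
    · subst hn; rw [a, a']; exact this.2.1
    · have h1 := b (n - 1) (by omega)
      have h2 := b' (n - 1) (by omega)
      rw [sub_add_cancel] at h1 h2
      rw [h1, h2]
  · simp at this
  · simp at this
  · refine Prod.ext this.1 (funext fun n => ?_)
    by_cases hn : n = -1
    · subst hn; rw [a, a']; exact this.2.1
    · have h1 := b (n + 1) (by omega)
      have h2 := b' (n + 1) (by omega)
      rw [add_sub_cancel_right] at h1 h2
      rw [h1, h2]

theorem HaltsOn.of_reaches {M : TM} {c d : Config}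
    (h : Relation.ReflTransGen (TMStep M) c d) (hd : HaltsOn M d) : HaltsOn M c := by
  obtain ⟨e, he, ht⟩ := hd
  exact ⟨e, h.trans he, ht⟩

theorem HaltsOn.reaches {M : TM} (hM : WFTM M) {c d : Config}
    (h : Relation.ReflTransGen (TMStep M) c d) (hc : HaltsOn M c) : HaltsOn M d := by
  induction h with
  | refl => exact hc
  | tail _ hs ih =>
    obtain ⟨e, he, ht⟩ := ih
    rcases he.cases_head with rfl | ⟨x, hx, hxe⟩
    · exact absurd hs (ht _)
    · rw [step_det hM hs hx]; exact ⟨e, hxe, ht⟩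

/-- A set of configurations each of which reaches the set again in at least one step contains no
halting configuration. -/
theorem not_haltsOn {M : TM} (hM : WFTM M) {S : Set Config}
    (hS : ∀ c ∈ S, ∃ d ∈ S, Relation.TransGen (TMStep M) c d) {c : Config} (hc : c ∈ S) :
    ¬ HaltsOn M c := by
  rintro ⟨e, he, ht⟩
  -- Every configuration on the way to `e` can still reach `S`.
  have : ∃ d ∈ S, Relation.ReflTransGen (TMStep M) e d := by
    clear ht
    induction he with
    | refl => exact ⟨c, hc, .refl⟩
    | tail _ hs ih =>
      obtain ⟨d, hd, hxd⟩ := ih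
      obtain ⟨d', hd', hdd'⟩ := hS d hd
      obtain ⟨x, hx, hxe⟩ := Relation.TransGen.head'_iff.1 (hdd'.trans_right hxd)
      rw [step_det hM hs hx]
      exact ⟨d', hd', hxe⟩
  obtain ⟨d, hd, hed⟩ := this
  obtain ⟨d', -, hdd'⟩ := hS d hd
  obtain ⟨x, hx, -⟩ := Relation.TransGen.head'_iff.1 (hdd'.trans_right hed)
  exact ht _ hx

/-! ### The upper bound -/

/-- The data of a Turing machine as a nested product, which carries a `Primcodable` instance. -/
abbrev TMData := List ℕ × List ℕ × ℕ × ℕ × List ((ℕ × ℕ) × (ℕ × ℕ × Bool))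

/-- The Turing machine with the given data. -/
def TMData.toTM (t : TMData) : TM := ⟨t.1, t.2.1, t.2.2.1, t.2.2.2.1, t.2.2.2.2⟩

/-- Finite codes of configurations: the state, the cells to the left of the head (nearest first),
and the cells from the head rightwards. All cells not listed are blank. -/
abbrev Code := ℕ × List ℕ × List ℕ

/-- The configuration with code `k`, for the blank symbol `b`. -/
def Code.toConfig (b : ℕ) (k : Code) : Config :=
  (k.1, fun z => match z with
    | .ofNat n => k.2.2.getD n b
    | .negSucc n => k.2.1.getD n b)

/-- One step of a machine on coded configurations; `none` if no transition applies. The first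
matching transition is used, which is the only one if the machine is well-formed. -/
def stepCode (t : TMData) (k : Code) : Option Code :=
  (@List.lookup _ _ instBEqOfDecidableEq (k.1, k.2.2.head?.getD t.2.2.1) t.2.2.2.2).map fun a =>
    cond a.2.2 (a.1, a.2.1 :: k.2.1, k.2.2.tail)
      (a.1, k.2.1.tail, k.2.1.head?.getD t.2.2.1 :: a.2.1 :: k.2.2.tail)

/-- The result of `y` steps, `none` if the machine has stopped before. -/
def runCode (t : TMData) (k : Code) (y : ℕ) : Option Code :=
  (fun o => o.bind (stepCode t))^[y] (some k)

/-- The codes using only states and symbols of `t`; they code exactly the valid configurations. -/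
def ValidCode (t : TMData) (k : Code) : Prop :=
  k.1 ∈ t.1 ∧ (∀ a ∈ k.2.1, a ∈ t.2.1) ∧ ∀ a ∈ k.2.2, a ∈ t.2.1

theorem lookup_some {α β : Type*} [DecidableEq α] {l : List (α × β)} {a : α} {b : β}
    (h : @List.lookup _ _ instBEqOfDecidableEq a l = some b) : (a, b) ∈ l := by
  rw [List.lookup_eq_some_iff] at h
  obtain ⟨l₁, l₂, rfl, -⟩ := h
  simp

theorem lookup_none {α β : Type*} [DecidableEq α] {l : List (α × β)} {a : α}
    (h : @List.lookup _ _ instBEqOfDecidableEq a l = none) (b : β) : (a, b) ∉ l := by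
  rw [List.lookup_eq_none_iff] at h
  intro hb
  simpa using h _ hb

theorem toConfig_zero (b : ℕ) (k : Code) : (k.toConfig b).2 0 = k.2.2.head?.getD b := by
  change k.2.2.getD 0 b = _
  cases k.2.2 <;> rfl

theorem stepCode_some {t : TMData} {k k' : Code} (h : stepCode t k = some k') :
    TMStep t.toTM (k.toConfig t.2.2.1) (k'.toConfig t.2.2.1) := by
  simp only [stepCode, Option.map_eq_some_iff] at h
  obtain ⟨⟨q', f, d⟩, ha, rfl⟩ := h
  have hmem := lookup_some ha
  obtain ⟨q, L, R⟩ := k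
  cases d
  · refine Or.inl ⟨f, by rw [toConfig_zero]; exact hmem, rfl, fun n hn => ?_⟩
    rcases n with n | n
    · obtain ⟨m, rfl⟩ : ∃ m, n = m + 1 := ⟨n - 1, by have : n ≠ 0 := by rintro rfl; exact hn rfl
                                                     omega⟩
      change (_ :: f :: R.tail).getD (m + 1 + 1) _ = R.getD (m + 1) _
      cases R <;> simp
    · rcases n with _ | n
      · change (L.head?.getD t.2.2.1 :: f :: R.tail).getD 0 t.2.2.1 = L.getD 0 t.2.2.1
        cases L <;> simp
      · change L.tail.getD n _ = L.getD (n + 1) _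
        cases L <;> simp
  · refine Or.inr ⟨f, by rw [toConfig_zero]; exact hmem, rfl, fun n hn => ?_⟩
    rcases n with n | n
    · obtain ⟨m, rfl⟩ : ∃ m, n = m + 1 := ⟨n - 1, by have : n ≠ 0 := by rintro rfl; exact hn rfl
                                                     omega⟩
      have : (Int.ofNat (m + 1) - 1) = Int.ofNat m := by simp
      rw [this]
      change R.tail.getD m _ = R.getD (m + 1) _
      cases R <;> simp
    · change (f :: L).getD (n + 1) _ = L.getD n _
      simp

theorem stepCode_none {t : TMData} {k : Code} (h : stepCode t k = none) (c : Config) :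
    ¬ TMStep t.toTM (k.toConfig t.2.2.1) c := by
  simp only [stepCode, Option.map_eq_none_iff] at h
  have := lookup_none h
  rintro (⟨f, hf, -⟩ | ⟨f, hf, -⟩) <;> rw [toConfig_zero] at hf <;> exact this _ hf

theorem runCode_succ (t : TMData) (k : Code) (y : ℕ) :
    runCode t k (y + 1) = (stepCode t k).bind fun k' => runCode t k' y := by
  rw [runCode, Function.iterate_succ_apply]
  cases h : stepCode t k with
  | none =>
    simp only [Option.bind_some, h, Option.bind_none]
    exact Function.iterate_fixed rfl y
  | some k' => simp [h, runCode]

theorem haltsOn_iff_runCode {t : TMData} (ht : WFTM t.toTM) (k : Code) :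
    HaltsOn t.toTM (k.toConfig t.2.2.1) ↔ ∃ y, runCode t k y = none := by
  constructor
  · rintro ⟨e, he, hend⟩
    generalize hc : k.toConfig t.2.2.1 = c at he
    induction he using Relation.ReflTransGen.head_induction_on generalizing k with
    | refl =>
      refine ⟨1, ?_⟩
      rw [runCode_succ]
      cases h : stepCode t k with
      | none => rfl
      | some k' => exact absurd (hc ▸ stepCode_some h) (hend _)
    | head hs _ ih =>
      cases h : stepCode t k with
      | none => exact absurd (hc ▸ hs) (stepCode_none h _)
      | some k' =>
        obtain ⟨y, hy⟩ := ih k' (step_det ht (hc ▸ stepCode_some h) hs)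
        exact ⟨y + 1, by rw [runCode_succ, h]; exact hy⟩
  · rintro ⟨y, hy⟩
    induction y generalizing k with
    | zero => simp [runCode] at hy
    | succ y ih =>
      rw [runCode_succ] at hy
      cases h : stepCode t k with
      | none => exact ⟨_, .refl, stepCode_none h⟩
      | some k' =>
        rw [h] at hy
        exact HaltsOn.of_reaches (.single (stepCode_some h)) (ih k' hy)

theorem validConfig_toConfig {t : TMData} (ht : WFTM t.toTM) {k : Code} (hk : ValidCode t k) :
    ValidConfig t.toTM (k.toConfig t.2.2.1) := by
  obtain ⟨q, L, R⟩ := k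
  obtain ⟨h1, h2, h3⟩ := hk
  have key : ∀ l : List ℕ, (∀ a ∈ l, a ∈ t.2.1) → ∀ n, l.getD n t.2.2.1 ∈ t.2.1 := by
    intro l hl n
    rw [List.getD_eq_getElem?_getD]
    rcases h : l[n]? with _ | a
    · exact ht.1
    · exact hl a (List.mem_of_getElem? h)
  refine ⟨h1, fun n => ?_, ?_⟩
  · rcases n with n | n
    · exact key R h3 n
    · exact key L h2 n
  · refine (Set.finite_Ico (-(L.length : ℤ)) R.length).subset ?_
    intro n hn
    rcases n with n | n
    · rw [Set.mem_ofPred_eq] at hn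
      have : n < R.length := by
        by_contra hlt
        exact hn (List.getD_eq_default _ _ (not_lt.1 hlt))
      simp only [Int.ofNat_eq_natCast, Set.mem_Ico]
      omega
    · have : n < L.length := by
        by_contra hlt
        exact hn (List.getD_eq_default _ _ (not_lt.1 hlt))
      simp only [Set.mem_Ico]
      omega

theorem exists_bound {b : ℕ} {T : ℤ → ℕ} (h : Set.Finite {n : ℤ | T n ≠ b}) :
    ∃ N : ℕ, ∀ n : ℤ, T n ≠ b → -(N : ℤ) < n ∧ n < N := by
  obtain ⟨N, hN⟩ := (h.image Int.natAbs).bddAbove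
  refine ⟨N + 1, fun n hn => ?_⟩
  have := hN ⟨n, hn, rfl⟩
  omega

theorem exists_code {t : TMData} {c : Config} (hc : ValidConfig t.toTM c) :
    ∃ k, ValidCode t k ∧ Code.toConfig t.2.2.1 k = c := by
  obtain ⟨q, T⟩ := c
  obtain ⟨h1, h2, h3⟩ := hc
  obtain ⟨N, hN⟩ := exists_bound h3
  refine ⟨(q, (List.range N).map fun i : ℕ => T (Int.negSucc i),
    (List.range N).map fun i : ℕ => T i), ⟨h1, ?_, ?_⟩, ?_⟩
  · simp only [List.mem_map]
    rintro _ ⟨i, -, rfl⟩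
    exact h2 _
  · simp only [List.mem_map]
    rintro _ ⟨i, -, rfl⟩
    exact h2 _
  · refine Prod.ext rfl (funext fun n => ?_)
    have key : n < -(N : ℤ) ∨ (N : ℤ) ≤ n → T n = t.2.2.1 := by
      intro hn
      by_contra hne
      have := hN n hne
      omega
    rcases n with n | n
    · change ((List.range N).map fun i : ℕ => T i).getD n _ = T n
      by_cases hn : n < N
      · simp [List.getD_eq_getElem?_getD, hn]
      · rw [List.getD_eq_default _ _ (by simpa using hn)]
        exact (key (Or.inr (by simpa using hn))).symm
    · change ((List.range N).map fun i : ℕ => T (Int.negSucc i)).getD n _ = T _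
      by_cases hn : n < N
      · simp [List.getD_eq_getElem?_getD, hn]
      · rw [List.getD_eq_default _ _ (by simpa using hn)]
        exact (key (Or.inl (by omega))).symm

theorem primrec_stepCode : Primrec₂ stepCode := by
  have b : Primrec fun a : TMData × Code => a.1.2.2.1 :=
    (Primrec.fst.comp (Primrec.snd.comp (Primrec.snd.comp Primrec.fst)))
  have d : Primrec fun a : TMData × Code => a.1.2.2.2.2 :=
    (Primrec.snd.comp (Primrec.snd.comp (Primrec.snd.comp (Primrec.snd.comp Primrec.fst))))
  have q : Primrec fun a : TMData × Code => a.2.1 := Primrec.fst.comp Primrec.snd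
  have L : Primrec fun a : TMData × Code => a.2.2.1 :=
    Primrec.fst.comp (Primrec.snd.comp Primrec.snd)
  have R : Primrec fun a : TMData × Code => a.2.2.2 :=
    Primrec.snd.comp (Primrec.snd.comp Primrec.snd)
  have hR := Primrec.option_getD.comp (Primrec.list_head?.comp R) b
  have hL := Primrec.option_getD.comp (Primrec.list_head?.comp L) b
  have key := Primrec.listLookup.comp (q.pair hR) d
  refine Primrec.option_map key ?_
  have p : Primrec fun a : (TMData × Code) × (ℕ × ℕ × Bool) => a.1 := Primrec.fst
  have q' : Primrec fun a : (TMData × Code) × (ℕ × ℕ × Bool) => a.2.1 :=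
    Primrec.fst.comp Primrec.snd
  have f : Primrec fun a : (TMData × Code) × (ℕ × ℕ × Bool) => a.2.2.1 :=
    Primrec.fst.comp (Primrec.snd.comp Primrec.snd)
  have e : Primrec fun a : (TMData × Code) × (ℕ × ℕ × Bool) => a.2.2.2 :=
    Primrec.snd.comp (Primrec.snd.comp Primrec.snd)
  exact Primrec.cond e
    (q'.pair ((Primrec.list_cons.comp f (L.comp p)).pair (Primrec.list_tail.comp (R.comp p))))
    (q'.pair ((Primrec.list_tail.comp (L.comp p)).pair
      (Primrec.list_cons.comp (hL.comp p)
        (Primrec.list_cons.comp f (Primrec.list_tail.comp (R.comp p))))))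

theorem primrec_runCode :
    Primrec fun a : TMData × Code × ℕ => runCode a.1 a.2.1 a.2.2 :=
  Primrec.nat_iterate (Primrec.snd.comp Primrec.snd)
    (Primrec.option_some.comp (Primrec.fst.comp Primrec.snd))
    (Primrec.option_bind Primrec.snd
      (primrec_stepCode.comp (Primrec.fst.comp (Primrec.fst.comp Primrec.fst)) Primrec.snd))

theorem primrec_mem {α : Type*} [Primcodable α] : PrimrecRel fun (a : α) (l : List α) => a ∈ l :=
  ((PrimrecRel.exists_mem_list (Primrec.eq (α := α))).comp Primrec.snd Primrec.fst).of_eq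
    fun x => by simp

theorem primrec_validCode : PrimrecRel ValidCode := by
  have hs : Primrec fun a : TMData × Code => a.1.1 := Primrec.fst.comp Primrec.fst
  have ha : Primrec fun a : TMData × Code => a.1.2.1 :=
    Primrec.fst.comp (Primrec.snd.comp Primrec.fst)
  have q : Primrec fun a : TMData × Code => a.2.1 := Primrec.fst.comp Primrec.snd
  have L : Primrec fun a : TMData × Code => a.2.2.1 :=
    Primrec.fst.comp (Primrec.snd.comp Primrec.snd)
  have R : Primrec fun a : TMData × Code => a.2.2.2 :=
    Primrec.snd.comp (Primrec.snd.comp Primrec.snd)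
  exact (primrec_mem.comp q hs).and
    ((primrec_mem.forall_mem_list.comp L ha).and (primrec_mem.forall_mem_list.comp R ha))

theorem primrec_WFTM : PrimrecPred fun t : TMData => WFTM t.toTM := by
  have hs : Primrec fun a : TMData => a.1 := Primrec.fst
  have ha : Primrec fun a : TMData => a.2.1 := Primrec.fst.comp Primrec.snd
  have hb : Primrec fun a : TMData => a.2.2.1 :=
    Primrec.fst.comp (Primrec.snd.comp Primrec.snd)
  have hq : Primrec fun a : TMData => a.2.2.2.1 :=
    Primrec.fst.comp (Primrec.snd.comp (Primrec.snd.comp Primrec.snd))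
  have hd : Primrec fun a : TMData => a.2.2.2.2 :=
    Primrec.snd.comp (Primrec.snd.comp (Primrec.snd.comp Primrec.snd))
  have typed : PrimrecRel fun (e : (ℕ × ℕ) × (ℕ × ℕ × Bool)) (t : TMData) =>
      e.1.1 ∈ t.1 ∧ e.1.2 ∈ t.2.1 ∧ e.2.1 ∈ t.1 ∧ e.2.2.1 ∈ t.2.1 :=
    (primrec_mem.comp (Primrec.fst.comp (Primrec.fst.comp Primrec.fst))
        (hs.comp Primrec.snd)).and
      ((primrec_mem.comp (Primrec.snd.comp (Primrec.fst.comp Primrec.fst))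
          (ha.comp Primrec.snd)).and
        ((primrec_mem.comp (Primrec.fst.comp (Primrec.snd.comp Primrec.fst))
            (hs.comp Primrec.snd)).and
          (primrec_mem.comp (Primrec.fst.comp (Primrec.snd.comp (Primrec.snd.comp Primrec.fst)))
            (ha.comp Primrec.snd))))
  have funct : PrimrecRel fun (e' e : (ℕ × ℕ) × (ℕ × ℕ × Bool)) => e.1 = e'.1 → e.2 = e'.2 :=
    (((Primrec.eq.comp (Primrec.fst.comp Primrec.snd) (Primrec.fst.comp Primrec.fst)).not).or
      (Primrec.eq.comp (Primrec.snd.comp Primrec.snd) (Primrec.snd.comp Primrec.fst))).of_eq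
      fun x => by tauto
  have funct' : PrimrecRel fun (e : (ℕ × ℕ) × (ℕ × ℕ × Bool))
      (l : List ((ℕ × ℕ) × (ℕ × ℕ × Bool))) => ∀ e' ∈ l, e.1 = e'.1 → e.2 = e'.2 :=
    funct.forall_mem_list.comp Primrec.snd Primrec.fst
  exact (primrec_mem.comp hb ha).and ((primrec_mem.comp hq hs).and
    ((typed.forall_mem_list.comp hd Primrec.id).and (funct'.forall_mem_list.comp hd hd)))

open Classical in
/-- For well-formed `M`, halting everywhere says that for every code `x` of a valid configuration
there is a number `y` of steps after which the run on `x` has stopped. -/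
theorem pi02_uniform : Pi02 { n : ℕ | ∃ M : TM, WFTM M ∧ n = encodeTM M ∧
    ∀ c : Config, ValidConfig M c → HaltsOn M c } := by
  -- Numbers that are not codes decode to junk; the condition `encode (dT n) = n` rules them out.
  let dT : ℕ → TMData := fun n => (Encodable.decode n).getD ([], [], 0, 0, [])
  let dK : ℕ → Code := fun n => (Encodable.decode n).getD (0, [], [])
  have hdT : Primrec dT := Primrec.option_getD.comp Primrec.decode (Primrec.const _)
  have hdK : Primrec dK := Primrec.option_getD.comp Primrec.decode (Primrec.const _)
  let P : ℕ × ℕ × ℕ → Prop := fun a => Encodable.encode (dT a.1) = a.1 ∧ WFTM (dT a.1).toTM ∧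
    (¬ ValidCode (dT a.1) (dK a.2.1) ∨ runCode (dT a.1) (dK a.2.1) a.2.2 = none)
  have hP : PrimrecPred P := by
    have t : Primrec fun a : ℕ × ℕ × ℕ => dT a.1 := hdT.comp Primrec.fst
    have k : Primrec fun a : ℕ × ℕ × ℕ => dK a.2.1 :=
      hdK.comp (Primrec.fst.comp Primrec.snd)
    exact (Primrec.eq.comp (Primrec.encode.comp t) Primrec.fst).and ((primrec_WFTM.comp t).and
      (((primrec_validCode.comp t k).not).or (Primrec.eq.comp
        (primrec_runCode.comp (t.pair (k.pair (Primrec.snd.comp Primrec.snd))))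
        (Primrec.const none))))
  refine ⟨fun n x y => decide (P (n, x, y)), hP.decide.to_comp, fun n => ?_⟩
  simp only [decide_eq_true_eq, P, Set.mem_ofPred_eq]
  constructor
  · rintro ⟨M, hM, rfl, hall⟩ x
    have e : dT (encodeTM M) = (M.states, M.alphabet, M.blank, M.start, M.delta) := by
      simp [dT, encodeTM]
    rw [e]
    by_cases hv : ValidCode (M.states, M.alphabet, M.blank, M.start, M.delta) (dK x)
    · obtain ⟨y, hy⟩ := (haltsOn_iff_runCode
        (t := (M.states, M.alphabet, M.blank, M.start, M.delta)) hM (dK x)).1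
        (hall _ (validConfig_toConfig
          (t := (M.states, M.alphabet, M.blank, M.start, M.delta)) hM hv))
      exact ⟨y, rfl, hM, Or.inr hy⟩
    · exact ⟨0, rfl, hM, Or.inl hv⟩
  · intro h
    obtain ⟨-, h1, h2, -⟩ := h 0
    refine ⟨(dT n).toTM, h2, h1.symm, fun c hc => ?_⟩
    obtain ⟨k, hk, rfl⟩ := exists_code hc
    obtain ⟨y, -, -, hy⟩ := h (Encodable.encode k)
    have e : dK (Encodable.encode k) = k := by
      simp only [dK, Encodable.encodek, Option.getD_some]
    rw [e] at hy
    exact (haltsOn_iff_runCode h2 k).2 ⟨y, hy.resolve_left (not_not.2 hk)⟩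

/-! ### Counter machines and LOOP programs -/

/-- Instructions of a counter machine: `inc r j` increments register `r` and jumps to `j`;
`dec r j j'` decrements register `r` and jumps to `j` if it is positive, and otherwise jumps
to `j'`. -/
inductive Instr
  | inc (r j : ℕ)
  | dec (r j j' : ℕ)

/-- A step of the counter machine given by the labelled instructions `P`. The machine stops at
labels carrying no instruction. -/
inductive CStep (P : List (ℕ × Instr)) : ℕ × (ℕ → ℕ) → ℕ × (ℕ → ℕ) → Prop
  | inc {p r j σ} : (p, Instr.inc r j) ∈ P → CStep P (p, σ) (j, Function.update σ r (σ r + 1))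
  | dec {p r j j' σ} : (p, Instr.dec r j j') ∈ P → σ r ≠ 0 →
      CStep P (p, σ) (j, Function.update σ r (σ r - 1))
  | zero {p r j j' σ} : (p, Instr.dec r j j') ∈ P → σ r = 0 → CStep P (p, σ) (j', σ)

/-- Reachability in a counter machine. -/
abbrev Reach (P : List (ℕ × Instr)) := Relation.ReflTransGen (CStep P)

/-- LOOP programs. `loop r c` decrements `r` and does `c`, as long as `r`
is positive. -/
inductive Prog
  | skip
  | inc (r : ℕ)
  | seq (c d : Prog)
  | loop (r : ℕ) (c : Prog)

namespace Prog

/-- The registers that `c` may write to do not include `r`. -/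
def Avoids (r : ℕ) : Prog → Prop
  | skip => True
  | inc s => r ≠ s
  | seq c d => c.Avoids r ∧ d.Avoids r
  | loop s c => r ≠ s ∧ c.Avoids r

/-- No loop body touches the register controlling the loop. -/
def WF : Prog → Prop
  | skip => True
  | inc _ => True
  | seq c d => c.WF ∧ d.WF
  | loop s c => c.Avoids s ∧ c.WF

/-- The effect of a (well-formed) program on the registers. -/
def exec : Prog → (ℕ → ℕ) → (ℕ → ℕ)
  | skip => id
  | inc r => fun σ => Function.update σ r (σ r + 1)
  | seq c d => fun σ => d.exec (c.exec σ)
  | loop r c => fun σ => (fun τ => c.exec (Function.update τ r (τ r - 1)))^[σ r] σ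

/-- The number of instructions of the compiled program. -/
def len : Prog → ℕ
  | skip => 0
  | inc _ => 1
  | seq c d => c.len + d.len
  | loop _ c => c.len + 2

/-- The compiled program, occupying the labels `o, …, o + c.len - 1` and exiting to `o + c.len`.
A loop is compiled with its test both before and after the body, so no bare jump is needed. -/
def compile : ℕ → Prog → List (ℕ × Instr)
  | _, skip => []
  | o, inc r => [(o, .inc r (o + 1))]
  | o, seq c d => compile o c ++ compile (o + c.len) d
  | o, loop r c => (o, .dec r (o + 1) (o + c.len + 2)) ::
      (o + 1 + c.len, .dec r (o + 1) (o + c.len + 2)) :: compile (o + 1) c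

theorem exec_of_avoids {r : ℕ} {c : Prog} (h : c.Avoids r) (σ : ℕ → ℕ) : c.exec σ r = σ r := by
  induction c generalizing σ with
  | skip => rfl
  | inc s => exact Function.update_of_ne h _ _
  | seq c d ihc ihd => exact (ihd h.2 _).trans (ihc h.1 _)
  | loop s c ih =>
    simp only [exec]
    generalize σ s = k
    induction k generalizing σ with
    | zero => rfl
    | succ k ihk =>
      rw [Function.iterate_succ_apply, ihk, ih h.2, Function.update_of_ne h.1]

theorem exec_loop_zero {r : ℕ} {c : Prog} {σ : ℕ → ℕ} (h : σ r = 0) :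
    (loop r c).exec σ = σ := by
  simp [exec, h]

theorem exec_loop_pos {r : ℕ} {c : Prog} (hc : c.Avoids r) {σ : ℕ → ℕ} (h : σ r ≠ 0) :
    (loop r c).exec σ = (loop r c).exec (c.exec (Function.update σ r (σ r - 1))) := by
  obtain ⟨k, hk⟩ := Nat.exists_eq_succ_of_ne_zero h
  simp only [exec]
  rw [exec_of_avoids hc, hk, Function.iterate_succ_apply]
  simp [hk]

theorem label_compile {c : Prog} {o : ℕ} {e : ℕ × Instr} (he : e ∈ compile o c) :
    o ≤ e.1 ∧ e.1 < o + c.len := by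
  induction c generalizing o with
  | skip => simp [compile] at he
  | inc r => simp only [compile, List.mem_singleton] at he; subst he; simp [len]
  | seq c d ihc ihd =>
    simp only [compile, List.mem_append] at he
    rcases he with he | he
    · have := ihc he; simp only [len]; omega
    · have := ihd he; simp only [len]; omega
  | loop r c ih =>
    simp only [compile, List.mem_cons] at he
    rcases he with rfl | rfl | he
    · simp only [len]; omega
    · simp only [len]; omega
    · have := ih he; simp only [len]; omega

theorem label_inj {c : Prog} {o : ℕ} {e e' : ℕ × Instr} (he : e ∈ compile o c)
    (he' : e' ∈ compile o c) (h : e.1 = e'.1) : e = e' := by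
  induction c generalizing o with
  | skip => simp [compile] at he
  | inc r =>
    simp only [compile, List.mem_singleton] at he he'
    rw [he, he']
  | seq c d ihc ihd =>
    simp only [compile, List.mem_append] at he he'
    rcases he with he | he <;> rcases he' with he' | he'
    · exact ihc he he'
    · have := label_compile he; have := label_compile he'; omega
    · have := label_compile he; have := label_compile he'; omega
    · exact ihd he he'
  | loop r c ih =>
    simp only [compile, List.mem_cons] at he he'
    rcases he with rfl | rfl | he <;> rcases he' with rfl | rfl | he'
    · rfl
    · simp only at h; omega
    · have := label_compile he'; simp only at h; omega
    · simp only at h; omega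
    · rfl
    · have := label_compile he'; simp only at h; omega
    · have := label_compile he; simp only at h; omega
    · have := label_compile he; simp only at h; omega
    · exact ih he he'

/-- The compiled code computes `exec`. -/
theorem reach_exec {P : List (ℕ × Instr)} {c : Prog} (hc : c.WF) {o : ℕ}
    (hP : ∀ e ∈ compile o c, e ∈ P) (σ : ℕ → ℕ) :
    Reach P (o, σ) (o + c.len, c.exec σ) := by
  induction c generalizing o σ with
  | skip => exact .refl
  | inc r => exact .single (.inc (hP (o, .inc r (o + 1)) (by simp [compile])))
  | seq c d ihc ihd =>
    refine (ihc hc.1 (fun e he => hP e (by simp [compile, he])) σ).trans ?_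
    have := ihd hc.2 (o := o + c.len) (fun e he => hP e (by simp [compile, he])) (c.exec σ)
    rwa [add_assoc] at this
  | loop r c ih =>
    have h1 : (o, Instr.dec r (o + 1) (o + c.len + 2)) ∈ P := hP _ (by simp [compile])
    have h2 : (o + 1 + c.len, Instr.dec r (o + 1) (o + c.len + 2)) ∈ P :=
      hP _ (by simp [compile])
    have h3 := fun σ => ih hc.2 (o := o + 1) (fun e he => hP e (by simp [compile, he])) σ
    -- The statement is proved for both copies of the loop test at once.
    have key : ∀ k, ∀ σ : ℕ → ℕ, σ r = k → ∀ p, (p, Instr.dec r (o + 1) (o + c.len + 2)) ∈ P →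
        Reach P (p, σ) (o + c.len + 2, (loop r c).exec σ) := by
      intro k
      induction k with
      | zero =>
        intro σ hσ p hp
        rw [exec_loop_zero hσ]
        exact .single (.zero hp hσ)
      | succ k ihk =>
        intro σ hσ p hp
        have hne : σ r ≠ 0 := by omega
        rw [exec_loop_pos hc.1 hne]
        refine .head (.dec hp hne) ((h3 _).trans (ihk _ ?_ _ h2))
        rw [exec_of_avoids hc.1]
        simp [hσ]
    exact key _ σ rfl o h1

/-- From every label inside the compiled code, with arbitrary register contents, the machine
reaches the exit: LOOP programs terminate even when started in the middle. -/
theorem reach_exit {P : List (ℕ × Instr)} {c : Prog} (hc : c.WF) {o : ℕ}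
    (hP : ∀ e ∈ compile o c, e ∈ P) {p : ℕ} (hp : o ≤ p) (hp' : p < o + c.len) (σ : ℕ → ℕ) :
    ∃ σ', Reach P (p, σ) (o + c.len, σ') := by
  induction c generalizing o σ with
  | skip => simp only [len] at hp'; omega
  | inc r =>
    simp only [len] at hp'
    obtain rfl : p = o := by omega
    exact ⟨_, reach_exec hc hP σ⟩
  | seq c d ihc ihd =>
    have hd : ∀ e ∈ compile (o + c.len) d, e ∈ P := fun e he => hP e (by simp [compile, he])
    simp only [len] at hp' ⊢
    rw [← add_assoc] at hp' ⊢
    by_cases h : p < o + c.len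
    · obtain ⟨σ', h'⟩ := ihc hc.1 (fun e he => hP e (by simp [compile, he])) hp h σ
      exact ⟨_, h'.trans (reach_exec hc.2 hd σ')⟩
    · exact ihd hc.2 hd (by omega) hp' σ
  | loop r c ih =>
    have whole := fun σ => reach_exec hc hP σ
    have h1 : (o, Instr.dec r (o + 1) (o + c.len + 2)) ∈ P := hP _ (by simp [compile])
    have h2 : (o + 1 + c.len, Instr.dec r (o + 1) (o + c.len + 2)) ∈ P :=
      hP _ (by simp [compile])
    have h3 : ∀ e ∈ compile (o + 1) c, e ∈ P := fun e he => hP e (by simp [compile, he])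
    have test : ∀ k, ∀ σ : ℕ → ℕ, σ r = k →
        ∃ σ', Reach P (o + 1 + c.len, σ) (o + c.len + 2, σ') := by
      intro k
      induction k with
      | zero => exact fun σ hσ => ⟨σ, .single (.zero h2 hσ)⟩
      | succ k ihk =>
        intro σ hσ
        have hne : σ r ≠ 0 := by omega
        obtain ⟨σ', h'⟩ := ihk (c.exec (Function.update σ r (σ r - 1)))
          (by rw [exec_of_avoids hc.1]; simp [hσ])
        exact ⟨σ', .head (.dec h2 hne) ((reach_exec hc.2 h3 _).trans h')⟩
    simp only [len] at hp' ⊢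
    by_cases ho : p = o
    · rw [ho]; exact ⟨_, whole σ⟩
    · by_cases hl : p < o + 1 + c.len
      · obtain ⟨σ', h'⟩ := ih hc.2 h3 (by omega) hl σ
        obtain ⟨σ'', h''⟩ := test _ σ' rfl
        exact ⟨σ'', h'.trans h''⟩
      · obtain rfl : p = o + 1 + c.len := by omega
        exact test _ σ rfl

end Prog

/-! ### LOOP programs compute the primitive recursive functions -/

namespace Prog

/-- Set register `r` to `0`. -/
def clear (r : ℕ) : Prog := loop r skip

theorem exec_clear (r : ℕ) (σ : ℕ → ℕ) : (clear r).exec σ = Function.update σ r 0 := by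
  generalize hk : σ r = k
  induction k generalizing σ with
  | zero => rw [clear, exec_loop_zero hk, ← hk, Function.update_eq_self]
  | succ k ih =>
    rw [clear, exec_loop_pos (by trivial) (by omega)]
    refine (ih _ (by simp [exec, hk])).trans ?_
    simp [exec]

/-- Copy register `s` to register `d`, using `t` as scratch. -/
def copy (s d t : ℕ) : Prog :=
  seq (seq (clear d) (clear t)) (seq (loop s (seq (inc d) (inc t))) (loop t (inc s)))

theorem exec_copy {s d t : ℕ} (hsd : s ≠ d) (hst : s ≠ t) (hdt : d ≠ t) (σ : ℕ → ℕ) :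
    (copy s d t).exec σ = Function.update (Function.update σ t 0) d (σ s) := by
  have h1 : ∀ k, ∀ σ : ℕ → ℕ, σ s = k → (loop s (seq (inc d) (inc t))).exec σ =
      fun r => if r = s then 0 else if r = d then σ d + k else if r = t then σ t + k else σ r := by
    intro k
    induction k with
    | zero =>
      intro σ h
      rw [exec_loop_zero h]
      funext r
      split_ifs <;> simp_all
    | succ k ih =>
      intro σ h
      rw [exec_loop_pos (c := seq (inc d) (inc t)) ⟨hsd, hst⟩ (by omega),
        ih _ (by simp [exec, hsd, hst, h])]
      funext r
      simp only [exec, Function.update_apply]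
      split_ifs <;> simp_all <;> omega
  have h2 : ∀ k, ∀ σ : ℕ → ℕ, σ t = k → (loop t (inc s)).exec σ =
      fun r => if r = t then 0 else if r = s then σ s + k else σ r := by
    intro k
    induction k with
    | zero =>
      intro σ h
      rw [exec_loop_zero h]
      funext r
      split_ifs <;> simp_all
    | succ k ih =>
      intro σ h
      rw [exec_loop_pos (c := inc s) hst.symm (by omega), ih _ (by simp [exec, hst.symm, h])]
      funext r
      simp only [exec, Function.update_apply]
      split_ifs <;> simp_all <;> omega
  change (loop t (inc s)).exec ((loop s (seq (inc d) (inc t))).exec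
    ((clear t).exec ((clear d).exec σ))) = _
  rw [exec_clear, exec_clear, h1 _ _ rfl, h2 _ _ rfl]
  funext r
  simp only [Function.update_apply]
  split_ifs <;> simp_all

theorem avoids_copy {s d t r : ℕ} (hs : r ≠ s) (hd : r ≠ d) (ht : r ≠ t) :
    (copy s d t).Avoids r := by
  simp [copy, clear, Avoids, hs, hd, ht]

theorem wf_copy {s d t : ℕ} (hsd : s ≠ d) (hst : s ≠ t) : (copy s d t).WF := by
  simp [copy, clear, WF, Avoids, hsd, hst, hst.symm]

/-- `c` puts the value of `f` at the registers `ins` into register `out`, using the registers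
from `b` on as scratch (with arbitrary initial contents). Inputs may be modified temporarily, but
no other register is written to. -/
structure Computes (c : Prog) {m : ℕ} (f : List.Vector ℕ m → ℕ) (ins : Fin m → ℕ) (out b : ℕ) :
    Prop where
  wf : c.WF
  avoids : ∀ r < b, r ≠ out → (∀ i, r ≠ ins i) → c.Avoids r
  val : ∀ σ, c.exec σ out = f (List.Vector.ofFn fun i => σ (ins i))
  frame : ∀ σ, ∀ r < b, r ≠ out → c.exec σ r = σ r

/-- Simultaneous computation of several functions into consecutive registers. -/
theorem exists_computes_family {m N b : ℕ} {g : Fin N → List.Vector ℕ m → ℕ}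
    (hg : ∀ i, ∀ (ins : Fin m → ℕ) (out b : ℕ), (∀ i, ins i < b) → (∀ i, ins i ≠ out) →
      out < b → ∃ c : Prog, c.Computes (g i) ins out b)
    {ins : Fin m → ℕ} (hb : ∀ i, ins i < b) (k : ℕ) (hk : k ≤ N) :
    ∃ c : Prog, c.WF ∧ (∀ r < b, (∀ i, r ≠ ins i) → c.Avoids r) ∧
      (∀ σ, ∀ r < b, c.exec σ r = σ r) ∧
      ∀ σ, ∀ i : Fin N, i.1 < k →
        c.exec σ (b + i) = g i (List.Vector.ofFn fun j => σ (ins j)) := by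
  induction k with
  | zero => exact ⟨skip, trivial, fun _ _ _ => trivial, fun _ _ _ => rfl, fun _ _ h => by omega⟩
  | succ k ih =>
    obtain ⟨c, h1, h2, h3, h4⟩ := ih (by omega)
    obtain ⟨d, hd⟩ := hg ⟨k, by omega⟩ ins (b + k) (b + N) (fun i => by have := hb i; omega)
      (fun i => by have := hb i; omega) (by omega)
    refine ⟨seq c d, ⟨h1, hd.wf⟩,
      fun r hr hi => ⟨h2 r hr hi, hd.avoids r (by omega) (by omega) hi⟩, ?_, ?_⟩
    · intro σ r hr
      exact (hd.frame _ r (by omega) (by omega)).trans (h3 σ r hr)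
    · intro σ i hi
      change d.exec (c.exec σ) (b + i) = _
      by_cases hik : i.1 = k
      · subst hik
        rw [hd.val]
        simp only [h3 σ _ (hb _)]
      · rw [hd.frame _ _ (by omega) (by omega), h4 σ i (by omega)]

/-- Primitive recursive functions are computed by LOOP programs, for any input registers and any
output register distinct from them. -/
theorem exists_computes {m : ℕ} {f : List.Vector ℕ m → ℕ} (hf : Nat.Primrec' f) :
    ∀ (ins : Fin m → ℕ) (out b : ℕ), (∀ i, ins i < b) → (∀ i, ins i ≠ out) → out < b →
      ∃ c : Prog, c.Computes f ins out b := by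
  induction hf with
  | zero =>
    intro ins out b _ _ _
    exact ⟨clear out, by simp [clear, WF, Avoids], fun r _ h _ => ⟨h, trivial⟩,
      fun σ => by simp [exec_clear], fun σ r _ h => by simp [exec_clear, h]⟩
  | succ =>
    intro ins out b hi hio ho
    have hib := hi 0
    refine ⟨seq (copy (ins 0) out b) (inc out), ⟨wf_copy (hio 0) (by omega), trivial⟩,
      fun r hr h h' => ⟨avoids_copy (h' 0) h (by omega), h⟩, fun σ => ?_, fun σ r hr h => ?_⟩
    · simp [exec, exec_copy (hio 0) hib.ne ho.ne]
    · simp [exec, exec_copy (hio 0) hib.ne ho.ne, h, hr.ne]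
  | get i =>
    intro ins out b hi hio ho
    have hib := hi i
    refine ⟨copy (ins i) out b, wf_copy (hio i) (by omega),
      fun r hr h h' => avoids_copy (h' i) h (by omega), fun σ => ?_, fun σ r hr h => ?_⟩
    · simp [exec_copy (hio i) hib.ne ho.ne]
    · simp [exec_copy (hio i) hib.ne ho.ne, h, hr.ne]
  | @comp m n f g _ _ ihf ihg =>
    intro ins out b hi hio ho
    obtain ⟨c, h1, h2, h3, h4⟩ := exists_computes_family ihg hi n le_rfl
    obtain ⟨d, hd⟩ := ihf (fun i => b + i) out (b + n) (fun i => by omega) (fun i => by omega)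
      (by omega)
    refine ⟨seq c d, ⟨h1, hd.wf⟩, fun r hr h h' => ⟨h2 r hr h',
      hd.avoids r (by omega) h fun i => by omega⟩, fun σ => ?_, fun σ r hr h => ?_⟩
    · change d.exec (c.exec σ) out = _
      rw [hd.val]
      congr 2
      funext i
      exact h4 σ i i.2
    · exact (hd.frame _ r (by omega) h).trans (h3 σ r hr)
  | @prec n f g _ _ ihf ihg =>
    intro ins out b hi hio ho
    have h0 := hi 0
    -- Register `b` counts up, `b + 1` controls the loop, and `b + 2` holds the current value.
    obtain ⟨cf, hcf⟩ := ihf (fun i => ins i.succ) (b + 2) (b + 4)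
      (fun i => by have := hi i.succ; omega) (fun i => by have := hi i.succ; omega) (by omega)
    obtain ⟨cg, hcg⟩ := ihg (Fin.cons b (Fin.cons (b + 2) fun i => ins i.succ)) (b + 3) (b + 4)
      (fun i => by
        refine Fin.cases ?_ (fun i => Fin.cases ?_ (fun i => ?_) i) i
        · simp
        · simp
        · have := hi i.succ; simp only [Fin.cons_succ]; omega)
      (fun i => by
        refine Fin.cases ?_ (fun i => Fin.cases ?_ (fun i => ?_) i) i
        · simp
        · simp
        · have := hi i.succ; simp only [Fin.cons_succ]; omega) (by omega)
    let body := seq cg (seq (copy (b + 3) (b + 2) (b + 4)) (inc b))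
    let pre := seq cf (seq (clear b) (copy (ins 0) (b + 1) (b + 3)))
    have avb : body.Avoids (b + 1) := by
      refine ⟨hcg.avoids _ (by omega) (by omega) fun i => ?_,
        avoids_copy (by omega) (by omega) (by omega), by simp [Avoids]⟩
      refine Fin.cases ?_ (fun i => Fin.cases ?_ (fun i => ?_) i) i
      · simp
      · simp
      · have := hi i.succ; simp only [Fin.cons_succ]; omega
    have hbody : ∀ σ, body.exec σ b = σ b + 1 ∧
        body.exec σ (b + 2) = g (σ b ::ᵥ σ (b + 2) ::ᵥ
          List.Vector.ofFn fun i : Fin n => σ (ins i.succ)) ∧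
        ∀ r < b, body.exec σ r = σ r := by
      intro σ
      have e : body.exec σ = (inc b).exec ((copy (b + 3) (b + 2) (b + 4)).exec (cg.exec σ)) := rfl
      rw [e, exec_copy (by omega) (by omega) (by omega)]
      refine ⟨?_, ?_, fun r hr => ?_⟩
      · simp [exec, hcg.frame σ b (by omega) (by omega)]
      · simp only [exec, Function.update_apply, hcg.val]
        simp [List.Vector.ofFn]
      · simp only [exec, Function.update_apply]
        rw [if_neg (by omega), if_neg (by omega), if_neg (by omega),
          hcg.frame σ r (by omega) (by omega)]
    have hloop : ∀ k, ∀ (F : List.Vector ℕ n → ℕ) (σ : ℕ → ℕ), σ (b + 1) = k →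
        σ (b + 2) = Nat.rec (F (List.Vector.ofFn fun i : Fin n => σ (ins i.succ)))
          (fun y IH => g (y ::ᵥ IH ::ᵥ List.Vector.ofFn fun i : Fin n => σ (ins i.succ))) (σ b) →
        (loop (b + 1) body).exec σ (b + 2) =
          Nat.rec (F (List.Vector.ofFn fun i : Fin n => σ (ins i.succ)))
          (fun y IH => g (y ::ᵥ IH ::ᵥ List.Vector.ofFn fun i : Fin n => σ (ins i.succ)))
            (σ b + k) ∧
        ∀ r < b, (loop (b + 1) body).exec σ r = σ r := by
      intro k F
      induction k with
      | zero =>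
        intro σ h h'
        rw [exec_loop_zero h]
        exact ⟨h', fun _ _ => rfl⟩
      | succ k ih =>
        intro σ h h'
        rw [exec_loop_pos avb (by omega)]
        generalize hτ : Function.update σ (b + 1) (σ (b + 1) - 1) = τ
        have t0 : ∀ r, r ≠ b + 1 → τ r = σ r := fun r hr => by
          rw [← hτ, Function.update_of_ne hr]
        obtain ⟨e1, e2, e3⟩ := hbody τ
        have e4 : ∀ i : Fin n, body.exec τ (ins i.succ) = σ (ins i.succ) := fun i => by
          have := hi i.succ
          rw [e3 _ this, t0 _ (by omega)]
        have := ih (body.exec τ) (by rw [exec_of_avoids avb, ← hτ]; simp [h]) (by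
          rw [e1, e2]
          simp only [e4, t0 b (by omega), t0 (b + 2) (by omega), h',
            fun i : Fin n => t0 (ins i.succ) (by have := hi i.succ; omega)])
        simp only [e4, e1, t0 b (by omega)] at this
        refine ⟨?_, fun r hr => ?_⟩
        · rw [this.1]
          rw [add_right_comm, add_assoc]
        · rw [this.2 r hr, e3 r hr, t0 r (by omega)]
    have hpre : ∀ σ, pre.exec σ b = 0 ∧ pre.exec σ (b + 1) = σ (ins 0) ∧ pre.exec σ (b + 2) =
        f (List.Vector.ofFn fun i : Fin n => σ (ins i.succ)) ∧ ∀ r < b, pre.exec σ r = σ r := by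
      intro σ
      have e : pre.exec σ = (copy (ins 0) (b + 1) (b + 3)).exec ((clear b).exec (cf.exec σ)) := rfl
      rw [e, exec_copy (by omega) (by omega) (by omega), exec_clear]
      refine ⟨?_, ?_, ?_, fun r hr => ?_⟩
      · simp
      · simp [h0.ne, hcf.frame σ (ins 0) (by omega) (by omega)]
      · simp [hcf.val]
      · simp only [Function.update_apply]
        rw [if_neg (by omega), if_neg (by omega), if_neg (by omega),
          hcf.frame σ r (by omega) (by omega)]
    have hall : ∀ σ, ∃ τ : ℕ → ℕ, (∀ r < b, τ r = σ r) ∧ τ (b + 2) =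
        Nat.rec (f (List.Vector.ofFn fun i : Fin n => σ (ins i.succ)))
          (fun y IH => g (y ::ᵥ IH ::ᵥ List.Vector.ofFn fun i : Fin n => σ (ins i.succ)))
          (σ (ins 0)) ∧
        (seq pre (seq (loop (b + 1) body) (copy (b + 2) out (b + 3)))).exec σ =
          Function.update (Function.update τ (b + 3) 0) out (τ (b + 2)) := by
      intro σ
      obtain ⟨p1, p2, p3, p4⟩ := hpre σ
      have p5 : ∀ i : Fin n, pre.exec σ (ins i.succ) = σ (ins i.succ) := fun i => p4 _ (hi _)
      obtain ⟨l1, l2⟩ := hloop _ f (pre.exec σ) rfl (by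
        simp only [p1, p3, p5]; rfl)
      refine ⟨(loop (b + 1) body).exec (pre.exec σ), fun r hr => (l2 r hr).trans (p4 r hr), ?_, ?_⟩
      · rw [l1]
        simp only [p1, p2, p5, zero_add]
      · exact exec_copy (by omega) (by omega) (by omega) _
    refine ⟨seq pre (seq (loop (b + 1) body) (copy (b + 2) out (b + 3))),
      ⟨⟨hcf.wf, ⟨trivial, trivial⟩, wf_copy (by omega) (by omega)⟩,
        ⟨avb, hcg.wf, wf_copy (by omega) (by omega), trivial⟩, wf_copy (by omega) (by omega)⟩,
      fun r hr h h' => ⟨⟨hcf.avoids r (by omega) (by omega) fun i => h' _, ⟨by omega, trivial⟩,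
        avoids_copy (h' 0) (by omega) (by omega)⟩, ⟨by omega, hcg.avoids r (by omega) (by omega)
          fun i => ?_, avoids_copy (by omega) (by omega) (by omega), by simp only [Avoids]; omega⟩,
        avoids_copy (by omega) h (by omega)⟩,
      fun σ => ?_, fun σ r hr h => ?_⟩
    · refine Fin.cases ?_ (fun i => Fin.cases ?_ (fun i => ?_) i) i
      · simp only [Fin.cons_zero]; omega
      · simp only [Fin.cons_zero, Fin.cons_succ]; omega
      · exact h' _
    · obtain ⟨τ, -, h2, h3⟩ := hall σ
      rw [h3]
      simp only [Function.update_self, h2]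
      rfl
    · obtain ⟨τ, h1, -, h3⟩ := hall σ
      rw [h3, Function.update_of_ne h, Function.update_of_ne (by omega), h1 r hr]

end Prog

/-! ### Simulating a counter machine by a Turing machine -/

/-- The transition of the simulating machine for the instruction labelled `p`, in phase `ph`, when
reading `s`. The blank is `0`, a cell holding one unit of register `r` is `r + 2`, and `1` is a
cell holding nothing. An increment runs right to the first blank and writes its unit there. A
decrement runs left to the first blank (phases `0` and `1`), then right (phase `2`) until it finds
a unit to remove or, at the next blank, learns that there is none; that blank is then turned into a
`1`, so that the head, which has to move, does not leave the block of non-blank cells by more than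
one cell. -/
def act (p : ℕ) : Instr → ℕ → ℕ → ℕ × ℕ × Bool
  | .inc r j, _, s => if s = 0 then (3 * j, r + 2, true) else (3 * p, s, true)
  | .dec r j j', ph, s =>
    if ph = 0 then (3 * p + 1, s, false)
    else if ph = 1 then if s = 0 then (3 * p + 2, 0, true) else (3 * p + 1, s, false)
    else if s = 0 then (3 * j', 1, true)
    else if s = r + 2 then (3 * j, 1, true)
    else (3 * p + 2, s, true)

/-- All transitions for one labelled instruction, with `K` registers. -/
def trans (K : ℕ) (e : ℕ × Instr) : List ((ℕ × ℕ) × (ℕ × ℕ × Bool)) :=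
  (List.range 3).flatMap fun ph =>
    (List.range (K + 2)).map fun s => ((3 * e.1 + ph, s), act e.1 e.2 ph s)

/-- The Turing machine simulating the counter machine `P` with registers below `K` and labels
below `S`. -/
def machine (P : List (ℕ × Instr)) (K S : ℕ) : TM where
  states := List.range (3 * S)
  alphabet := List.range (K + 2)
  blank := 0
  start := 0
  delta := P.flatMap (trans K)

/-- All jump targets and registers of an instruction are in range. -/
def Instr.Bounded (K S : ℕ) : Instr → Prop
  | inc r j => r < K ∧ j < S
  | dec r j j' => r < K ∧ j < S ∧ j' < S

/-- The program has unique labels, and its labels, jump targets and registers are in range. -/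
structure Fits (P : List (ℕ × Instr)) (K S : ℕ) : Prop where
  inj : ∀ e ∈ P, ∀ e' ∈ P, e.1 = e'.1 → e = e'
  label : ∀ e ∈ P, e.1 < S
  bounded : ∀ e ∈ P, e.2.Bounded K S
  pos : 0 < S

theorem mem_delta {P : List (ℕ × Instr)} {K S : ℕ} {e : (ℕ × ℕ) × (ℕ × ℕ × Bool)} :
    e ∈ (machine P K S).delta ↔ ∃ p i, (p, i) ∈ P ∧ ∃ ph < 3, ∃ s < K + 2,
      e = ((3 * p + ph, s), act p i ph s) := by
  simp only [machine, trans, List.mem_flatMap, List.mem_map, List.mem_range, Prod.exists]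
  constructor
  · rintro ⟨p, i, h, ph, hph, s, hs, rfl⟩
    exact ⟨p, i, h, ph, hph, s, hs, rfl⟩
  · rintro ⟨p, i, h, ph, hph, s, hs, rfl⟩
    exact ⟨p, i, h, ph, hph, s, hs, rfl⟩

theorem wf_machine {P : List (ℕ × Instr)} {K S : ℕ} (hP : Fits P K S) :
    WFTM (machine P K S) := by
  refine ⟨by simp [machine], by simpa [machine] using hP.pos, fun e he => ?_,
    fun e he e' he' h => ?_⟩
  · obtain ⟨p, i, hi, ph, hph, s, hs, rfl⟩ := mem_delta.1 he
    have hp : p < S := hP.label _ hi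
    have hb : i.Bounded K S := hP.bounded _ hi
    simp only [machine, List.mem_range]
    refine ⟨by omega, hs, ?_⟩
    cases i with
    | inc r j =>
      obtain ⟨h1, h2⟩ := hb
      simp only [act]
      split_ifs <;> simp only <;> omega
    | dec r j j' =>
      obtain ⟨h1, h2, h3⟩ := hb
      simp only [act]
      split_ifs <;> simp only <;> omega
  · obtain ⟨p, i, hi, ph, hph, s, hs, rfl⟩ := mem_delta.1 he
    obtain ⟨p', i', hi', ph', hph', s', hs', rfl⟩ := mem_delta.1 he'
    simp only [Prod.mk.injEq] at h
    obtain ⟨h, rfl⟩ := h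
    obtain rfl : p = p' := by omega
    obtain rfl : ph = ph' := by omega
    cases hP.inj _ hi _ hi' rfl
    rfl

theorem halts_of_no_instr {P : List (ℕ × Instr)} {K S p ph : ℕ} (hph : ph < 3)
    (hp : ∀ i, (p, i) ∉ P) (T : ℤ → ℕ) (h : ℤ) :
    HaltsOn (machine P K S) (conf (3 * p + ph) T h) := by
  refine ⟨_, .refl, fun c hc => ?_⟩
  have : ∀ x, ((3 * p + ph, T (0 + h)), x) ∉ (machine P K S).delta := by
    intro x hx
    obtain ⟨p', i, hi, ph', hph', s, hs, he⟩ := mem_delta.1 hx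
    simp only [Prod.mk.injEq] at he
    obtain rfl : p = p' := by omega
    exact hp i hi
  rcases hc with ⟨f, hf, -⟩ | ⟨f, hf, -⟩ <;> exact this _ hf

theorem machine_right {P : List (ℕ × Instr)} {K S p ph q f : ℕ} {i : Instr} {T : ℤ → ℕ} {h : ℤ}
    (hi : (p, i) ∈ P) (hph : ph < 3) (hs : T h < K + 2) (ha : act p i ph (T h) = (q, f, true)) :
    TMStep (machine P K S) (conf (3 * p + ph) T h) (conf q (Function.update T h f) (h + 1)) :=
  conf_step_right (mem_delta.2 ⟨p, i, hi, ph, hph, _, hs, by rw [ha]⟩)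

theorem machine_left {P : List (ℕ × Instr)} {K S p ph q f : ℕ} {i : Instr} {T : ℤ → ℕ} {h : ℤ}
    (hi : (p, i) ∈ P) (hph : ph < 3) (hs : T h < K + 2) (ha : act p i ph (T h) = (q, f, false)) :
    TMStep (machine P K S) (conf (3 * p + ph) T h) (conf q (Function.update T h f) (h - 1)) :=
  conf_step_left (mem_delta.2 ⟨p, i, hi, ph, hph, _, hs, by rw [ha]⟩)

theorem sweep_right {P : List (ℕ × Instr)} {K S p ph : ℕ} {i : Instr} {T : ℤ → ℕ} {h m : ℤ}
    (hi : (p, i) ∈ P) (hph : ph < 3) (hT : ∀ n, T n < K + 2) (hm : h ≤ m)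
    (ha : ∀ n, h ≤ n → n < m → act p i ph (T n) = (3 * p + ph, T n, true)) :
    Relation.ReflTransGen (TMStep (machine P K S)) (conf (3 * p + ph) T h)
      (conf (3 * p + ph) T m) := by
  induction m, hm using Int.leInduction with
  | base => exact .refl
  | succ m hm ih =>
    refine (ih fun n h1 h2 => ha n h1 (by omega)).tail ?_
    have := machine_right (S := S) hi hph (hT m) (ha m hm (by omega))
    rwa [Function.update_eq_self] at this

theorem sweep_left {P : List (ℕ × Instr)} {K S p ph : ℕ} {i : Instr} {T : ℤ → ℕ} {h m : ℤ}
    (hi : (p, i) ∈ P) (hph : ph < 3) (hT : ∀ n, T n < K + 2) (hm : m ≤ h)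
    (ha : ∀ n, m < n → n ≤ h → act p i ph (T n) = (3 * p + ph, T n, false)) :
    Relation.ReflTransGen (TMStep (machine P K S)) (conf (3 * p + ph) T h)
      (conf (3 * p + ph) T m) := by
  induction m, hm using Int.leInductionDown with
  | base => exact .refl
  | pred m hm ih =>
    refine (ih fun n h1 h2 => ha n (by omega) h2).tail ?_
    have := machine_left (S := S) hi hph (hT m) (ha m (by omega) hm)
    rwa [Function.update_eq_self] at this

theorem exists_first {Q : ℤ → Prop} {x y : ℤ} (hxy : x ≤ y) (hy : Q y) :
    ∃ m, x ≤ m ∧ m ≤ y ∧ Q m ∧ ∀ n, x ≤ n → n < m → ¬ Q n := by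
  obtain ⟨m, ⟨h1, h2⟩, h3⟩ := Int.exists_least_of_bdd (P := fun n => x ≤ n ∧ Q n)
    ⟨x, fun z hz => hz.1⟩ ⟨y, hxy, hy⟩
  refine ⟨m, h1, h3 y ⟨hxy, hy⟩, h2, fun n hn hnm hq => ?_⟩
  have := h3 n ⟨hn, hq⟩
  omega

theorem exists_last {Q : ℤ → Prop} {x y : ℤ} (hxy : y ≤ x) (hy : Q y) :
    ∃ m, m ≤ x ∧ y ≤ m ∧ Q m ∧ ∀ n, m < n → n ≤ x → ¬ Q n := by
  obtain ⟨m, ⟨h1, h2⟩, h3⟩ := Int.exists_greatest_of_bdd (P := fun n => n ≤ x ∧ Q n)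
    ⟨x, fun z hz => hz.1⟩ ⟨y, hxy, hy⟩
  refine ⟨m, h1, h3 y ⟨hxy, hy⟩, h2, fun n hn hnm hq => ?_⟩
  have := h3 n ⟨hnm, hq⟩
  omega

/-- The working zone of a head at `h` is the block of non-blank cells strictly between the
positions `a < h ≤ b`, closed off by a blank at `a`. The cell at `b` is not constrained. -/
structure Zone (T : ℤ → ℕ) (h a b : ℤ) : Prop where
  left : a < h
  right : h ≤ b
  blank : T a = 0
  full : ∀ n, a < n → n < b → T n ≠ 0

/-- The register contents represented by the zone between `a` and `b`. -/
noncomputable def regs (T : ℤ → ℕ) (a b : ℤ) (r : ℕ) : ℕ :=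
  ((Finset.Ioo a b).filter fun n => T n = r + 2).card

theorem regs_append {T : ℤ → ℕ} {a b : ℤ} (hab : a < b) (f r : ℕ) :
    regs (Function.update T b f) a (b + 1) r =
      if f = r + 2 then regs T a b r + 1 else regs T a b r := by
  have e : Finset.Ioo a (b + 1) = insert b (Finset.Ioo a b) := by
    ext n; simp only [Finset.mem_Ioo, Finset.mem_insert]; omega
  have e' : (Finset.Ioo a b).filter (fun n => Function.update T b f n = r + 2) =
      (Finset.Ioo a b).filter fun n => T n = r + 2 := by
    refine Finset.filter_congr fun n hn => ?_
    rw [Function.update_of_ne]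
    rw [Finset.mem_Ioo] at hn
    omega
  rw [regs, e, Finset.filter_insert, e']
  simp only [Function.update_self]
  split_ifs
  · rw [Finset.card_insert_of_notMem (by simp)]; rfl
  · rfl

theorem regs_erase {T : ℤ → ℕ} {a b m : ℤ} {r : ℕ} (ha : a < m) (hb : m < b)
    (hm : T m = r + 2) :
    regs (Function.update T m 1) a b = Function.update (regs T a b) r (regs T a b r - 1) := by
  funext r'
  by_cases hr : r' = r
  · subst hr
    rw [Function.update_self, regs, regs, ← Finset.card_erase_of_mem (a := m) (by simp [*])]
    congr 1
    ext n
    simp only [Finset.mem_filter, Finset.mem_Ioo, Finset.mem_erase, Function.update_apply]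
    split_ifs with h <;> simp [h]
  · rw [Function.update_of_ne hr, regs, regs]
    congr 1
    refine Finset.filter_congr fun n hn => ?_
    rw [Function.update_apply]
    split_ifs with h
    · subst h; omega
    · rfl

theorem regs_pos {T : ℤ → ℕ} {a b m : ℤ} {r : ℕ} (ha : a < m) (hb : m < b)
    (hm : T m = r + 2) : regs T a b r ≠ 0 :=
  Finset.card_ne_zero_of_mem (a := m) (by simp [*])

/-- A Turing machine run simulating one counter machine step. The zone grows by at most one cell;
nothing outside the new zone is changed. -/
theorem simulate {P : List (ℕ × Instr)} {K S : ℕ} (hP : Fits P K S) {T : ℤ → ℕ} {h a b : ℤ}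
    {p p' : ℕ} {σ' : ℕ → ℕ} (hT : ∀ n, T n < K + 2) (hz : Zone T h a b) (hb : T b = 0)
    (hs : CStep P (p, regs T a b) (p', σ')) :
    ∃ T' h' b', Relation.TransGen (TMStep (machine P K S)) (conf (3 * p) T h)
        (conf (3 * p') T' h') ∧
      (∀ n, T' n < K + 2) ∧ Zone T' h' a b' ∧ (b' = b ∨ b' = b + 1) ∧ regs T' a b' = σ' ∧
      ∀ n, b' ≤ n → T' n = T n := by
  obtain ⟨h1, h2, h3, h4⟩ := hz
  have upd : ∀ m f, f < K + 2 → ∀ n, Function.update T m f n < K + 2 := by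
    intro m f hf n
    rw [Function.update_apply]
    split_ifs
    exacts [hf, hT n]
  -- Writing a non-blank symbol on the blank cell at `b`.
  have grow : ∀ f, f ≠ 0 → Zone (Function.update T b f) (b + 1) a (b + 1) := by
    intro f hf
    refine ⟨by omega, le_rfl, by rw [Function.update_of_ne (by omega), h3], fun n hn hn' => ?_⟩
    rw [Function.update_apply]
    split_ifs with hnb
    · exact hf
    · exact h4 n hn (by omega)
  have same : ∀ f n, b + 1 ≤ n → Function.update T b f n = T n := fun f n hn =>
    Function.update_of_ne (by omega) _ _
  -- The search of a decrement instruction leads to the first cell with a unit of `r`, or to `b`.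
  have search : ∀ r j j', (p, Instr.dec r j j') ∈ P → ∃ m, a < m ∧ m ≤ b ∧
      (T m = 0 ∨ T m = r + 2) ∧ (∀ n, a < n → n < m → ¬ (T n = 0 ∨ T n = r + 2)) ∧
      Relation.TransGen (TMStep (machine P K S)) (conf (3 * p) T h) (conf (3 * p + 2) T m) := by
    intro r j j' hi
    have s1 := machine_left (S := S) (ph := 0) (f := T h) (q := 3 * p + 1) hi (by omega) (hT h)
      (by simp [act])
    rw [Function.update_eq_self] at s1
    have s2 := sweep_left (S := S) (ph := 1) (h := h - 1) (m := a) hi (by omega) hT (by omega)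
      (fun n hn hn' => by simp [act, h4 n hn (by omega)])
    have s3 := machine_right (S := S) (ph := 1) (f := T a) (q := 3 * p + 2) hi (by omega) (hT a)
      (by simp [act, h3])
    rw [Function.update_eq_self] at s3
    obtain ⟨m, hm1, hm2, hm3, hm4⟩ := exists_first (Q := fun n => T n = 0 ∨ T n = r + 2)
      (x := a + 1) (y := b) (by omega) (Or.inl hb)
    have s4 := sweep_right (S := S) (ph := 2) (h := a + 1) (m := m) hi (by omega) hT hm1
      (fun n hn hn' => by
        have := hm4 n hn hn'
        rw [not_or] at this
        simp [act, this])
    exact ⟨m, by omega, hm2, hm3, fun n hn => hm4 n (by omega),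
      .head' s1 ((s2.tail s3).trans s4)⟩
  generalize hσ : regs T a b = σ at hs
  cases hs with
  | @inc _ r _ _ hi =>
    have hr : r < K := (hP.bounded _ hi).1
    have s1 := sweep_right (S := S) (ph := 0) (h := h) (m := b) hi (by omega) hT h2
      (fun n hn hn' => by simp [act, h4 n (by omega) hn'])
    have s2 := machine_right (S := S) (ph := 0) (f := r + 2) (q := 3 * p') hi (by omega) (hT b)
      (by simp [act, hb])
    refine ⟨_, _, b + 1, .tail' s1 s2, upd _ _ (by omega), grow _ (by omega), Or.inr rfl, ?_,
      same _⟩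
    subst hσ
    funext r'
    rw [regs_append (by omega), Function.update_apply]
    split_ifs with e1 e2 e2
    · rw [e2]
    · omega
    · omega
    · rfl
  | @dec _ r j j' _ hi hne =>
    obtain ⟨m, m1, m2, m3, m4, m5⟩ := search _ _ _ hi
    have hmb : m < b := by
      by_contra hcon
      obtain rfl : m = b := by omega
      refine hne ?_
      rw [← hσ, regs, Finset.card_eq_zero, Finset.filter_eq_empty_iff]
      intro n hn hn'
      rw [Finset.mem_Ioo] at hn
      exact m4 n hn.1 hn.2 (Or.inr hn')
    have hm : T m = r + 2 := m3.resolve_left (h4 m m1 hmb)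
    have s1 := machine_right (S := S) (ph := 2) (f := 1) (q := 3 * p') hi (by omega) (hT m)
      (by simp [act, hm])
    refine ⟨_, _, b, m5.tail s1, upd _ _ (by omega), ⟨by omega, by omega, ?_, fun n hn hn' => ?_⟩,
      Or.inl rfl, ?_, fun n hn => Function.update_of_ne (by omega) _ _⟩
    · rw [Function.update_of_ne (by omega), h3]
    · rw [Function.update_apply]
      split_ifs
      · omega
      · exact h4 n hn hn'
    · rw [regs_erase m1 hmb hm, hσ]
  | @zero _ r j j' _ hi h0 =>
    obtain ⟨m, m1, m2, m3, m4, m5⟩ := search _ _ _ hi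
    obtain rfl : m = b := by
      by_contra hne
      have hmb : m < b := by omega
      refine regs_pos m1 hmb (m3.resolve_left (h4 m m1 hmb)) ?_
      rw [hσ, h0]
    have s1 := machine_right (S := S) (ph := 2) (f := 1) (q := 3 * p') hi (by omega) (hT m)
      (by simp [act, hb])
    refine ⟨_, _, m + 1, m5.tail s1, upd _ _ (by omega), grow _ (by omega), Or.inr rfl, ?_,
      same _⟩
    rw [← hσ]
    funext r'
    rw [regs_append (by omega), if_neg (by omega)]

/-- If the counter machine stops from all labels and all register contents, then the Turing machine
halts whenever it starts an instruction. The zone may swallow further cells each time it grows, but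
this happens only finitely often since the tape is blank from `N` on. -/
theorem halts_of_start {P : List (ℕ × Instr)} {K S : ℕ} (hP : Fits P K S)
    (hall : ∀ p σ, ∃ p' σ', Reach P (p, σ) (p', σ') ∧ ∀ i, (p', i) ∉ P) {N a : ℤ} (k : ℕ) :
    ∀ {T : ℤ → ℕ} {h b : ℤ} {p : ℕ}, (∀ n, T n < K + 2) → Zone T h a b → T b = 0 →
      (∀ n, N ≤ n → b ≤ n → T n = 0) → (N - b).toNat ≤ k →
      HaltsOn (machine P K S) (conf (3 * p) T h) := by
  induction k using Nat.strong_induction_on with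
  | _ k ihk =>
    intro T h b p hT hz hb hN hk
    obtain ⟨p₁, σ₁, hr, hend⟩ := hall p (regs T a b)
    generalize hc : (p, regs T a b) = c at hr
    induction hr using Relation.ReflTransGen.head_induction_on generalizing T h b p with
    | refl =>
      cases hc
      exact halts_of_no_instr (ph := 0) (by omega) hend T h
    | @head c c' hs _ ih =>
      obtain ⟨p', σ'⟩ := c'
      subst hc
      obtain ⟨T', h', b', hreach, hT', hz', hbb, hσ', hsame⟩ := simulate hP hT hz hb hs
      refine HaltsOn.of_reaches hreach.to_reflTransGen ?_
      have hN' : ∀ n, N ≤ n → b' ≤ n → T' n = 0 := fun n hn hn' => by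
        rw [hsame n hn', hN n hn (by omega)]
      by_cases hb0 : T' b' = 0
      · exact ih hT' hz' hb0 hN' (by omega) (by rw [hσ'])
      · have hlt : b' < N := by
          by_contra hcon
          exact hb0 (hN' b' (by omega) le_rfl)
        have hbe : b' = b + 1 := by
          rcases hbb with rfl | h
          · exact absurd (by rw [hsame _ le_rfl, hb]) hb0
          · exact h
        obtain ⟨b₂, e1, e2, e3, e4⟩ := exists_first (Q := fun n => T' n = 0) (x := b') (y := N)
          hlt.le (hN' N le_rfl hlt.le)
        refine ihk (N - b₂).toNat (by omega) (b := b₂) hT' ⟨hz'.left, by have := hz'.right; omega,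
          hz'.blank, fun n hn hn' => ?_⟩ e3 (fun n hn hn' => hN' n hn (by omega)) le_rfl
        by_cases hnb : n < b'
        · exact hz'.full n hn hnb
        · exact e4 n (by omega) hn'

theorem halts_all {P : List (ℕ × Instr)} {K S : ℕ} (hP : Fits P K S)
    (hall : ∀ p σ, ∃ p' σ', Reach P (p, σ) (p', σ') ∧ ∀ i, (p', i) ∉ P) {c : Config}
    (hc : ValidConfig (machine P K S) c) : HaltsOn (machine P K S) c := by
  have start : ∀ {T : ℤ → ℕ} {h : ℤ} {p : ℕ}, (∀ n, T n < K + 2) → Set.Finite {n | T n ≠ 0} →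
      HaltsOn (machine P K S) (conf (3 * p) T h) := by
    intro T h p hT hfin
    obtain ⟨N, hN⟩ := exists_bound hfin
    have hz : ∀ n : ℤ, n ≤ -N ∨ N ≤ n → T n = 0 := by
      intro n hn
      by_contra hne
      have := hN n hne
      omega
    obtain ⟨a, a1, a2, a3, a4⟩ := exists_last (Q := fun n => T n = 0) (x := h - 1)
      (y := min (h - 1) (-N)) (by omega) (hz _ (by omega))
    obtain ⟨b, b1, b2, b3, b4⟩ := exists_first (Q := fun n => T n = 0) (x := h)
      (y := max h N) (by omega) (hz _ (by omega))
    refine halts_of_start hP hall (N := N) (a := a) _ hT ⟨by omega, b1, a3, fun n hn hn' => ?_⟩ b3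
      (fun n hn _ => hz n (by omega)) le_rfl
    by_cases hnh : n < h
    · exact a4 n hn (by omega)
    · exact b4 n (by omega) hn'
  obtain ⟨q, T⟩ := c
  obtain ⟨-, hT, hfin⟩ := hc
  replace hT : ∀ n, T n < K + 2 := fun n => List.mem_range.1 (hT n)
  replace hfin : Set.Finite {n : ℤ | T n ≠ 0} := hfin
  have upd : ∀ (m : ℤ) f, f < K + 2 → ∀ n, Function.update T m f n < K + 2 := by
    intro m f hf n
    rw [Function.update_apply]
    split_ifs
    exacts [hf, hT n]
  have ufin : ∀ (m : ℤ) (f : ℕ), Set.Finite {n | Function.update T m f n ≠ 0} := by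
    intro m f
    refine (hfin.insert m).subset fun n hn => ?_
    by_cases hnm : n = m
    · exact Or.inl hnm
    · refine Or.inr ?_
      have : Function.update T m f n ≠ 0 := hn
      rwa [Function.update_of_ne hnm] at this
  have hconf : ((q, T) : Config) = conf q T 0 := by simp [conf]
  rw [hconf]
  obtain ⟨p, ph, hph, rfl⟩ : ∃ p ph, ph < 3 ∧ q = 3 * p + ph :=
    ⟨q / 3, q % 3, Nat.mod_lt _ (by omega), (Nat.div_add_mod q 3).symm⟩
  by_cases hp : ∃ i, (p, i) ∈ P
  swap
  · exact halts_of_no_instr hph (not_exists.1 hp) T 0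
  obtain ⟨i, hi⟩ := hp
  obtain ⟨N, hN⟩ := exists_bound hfin
  have hz : ∀ n : ℤ, n ≤ -N ∨ N ≤ n → T n = 0 := by
    intro n hn
    by_contra hne
    have := hN n hne
    omega
  cases i with
  | inc r j =>
    have hr : r < K := (hP.bounded _ hi).1
    by_cases h0 : T 0 = 0
    · exact HaltsOn.of_reaches (.single (machine_right (f := r + 2) (q := 3 * j) hi hph (hT 0)
        (by simp [act, h0]))) (start (upd _ _ (by omega)) (ufin _ _))
    · exact HaltsOn.of_reaches (.single (machine_right (f := T 0) (q := 3 * p) hi hph (hT 0)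
        (by simp [act, h0]))) (start (upd _ _ (hT 0)) (ufin _ _))
  | dec r j j' =>
    have phase2 : ∀ h, HaltsOn (machine P K S) (conf (3 * p + 2) T h) := by
      intro h
      obtain ⟨m, m1, m2, m3, m4⟩ := exists_first (Q := fun n => T n = 0 ∨ T n = r + 2) (x := h)
        (y := max h N) (by omega) (Or.inl (hz _ (by omega)))
      refine HaltsOn.of_reaches (sweep_right (S := S) (ph := 2) (m := m) hi (by omega) hT m1
        (fun n hn hn' => by
          have := m4 n hn hn'
          rw [not_or] at this
          simp [act, this])) ?_
      rcases m3 with m3 | m3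
      · exact HaltsOn.of_reaches (.single (machine_right (f := 1) (q := 3 * j') hi (by omega)
          (hT m) (by simp [act, m3]))) (start (upd _ _ (by omega)) (ufin _ _))
      · exact HaltsOn.of_reaches (.single (machine_right (f := 1) (q := 3 * j) hi (by omega)
          (hT m) (by simp [act, m3]))) (start (upd _ _ (by omega)) (ufin _ _))
    obtain rfl | rfl | rfl : ph = 0 ∨ ph = 1 ∨ ph = 2 := by omega
    · exact start hT hfin
    · obtain ⟨m, m1, m2, m3, m4⟩ := exists_last (Q := fun n => T n = 0) (x := 0)
        (y := -N) (by omega) (hz _ (by omega))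
      refine HaltsOn.of_reaches (sweep_left (S := S) (ph := 1) (m := m) hi (by omega) hT m1
        (fun n hn hn' => by simp [act, m4 n hn hn'])) ?_
      have s := machine_right (S := S) (ph := 1) (f := T m) (q := 3 * p + 2) hi (by omega) (hT m)
        (by simp [act, m3])
      rw [Function.update_eq_self] at s
      exact HaltsOn.of_reaches (.single s) (phase2 _)
    · exact phase2 0

/-- The configuration starts the instruction `p` with registers `σ`, and nothing is written to the
right of its zone; from such configurations the simulation is exact. -/
def Represents (K p : ℕ) (σ : ℕ → ℕ) (c : Config) : Prop :=
  ∃ T h a b, c = conf (3 * p) T h ∧ (∀ n, T n < K + 2) ∧ Zone T h a b ∧ (∀ n, b ≤ n → T n = 0) ∧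
    regs T a b = σ

theorem Represents.transGen {P : List (ℕ × Instr)} {K S : ℕ} (hP : Fits P K S)
    {x y : ℕ × (ℕ → ℕ)} (hxy : Relation.TransGen (CStep P) x y) {c : Config}
    (hc : Represents K x.1 x.2 c) :
    ∃ d, Represents K y.1 y.2 d ∧ Relation.TransGen (TMStep (machine P K S)) c d := by
  have one : ∀ {x y : ℕ × (ℕ → ℕ)}, CStep P x y → ∀ {c}, Represents K x.1 x.2 c →
      ∃ d, Represents K y.1 y.2 d ∧ Relation.TransGen (TMStep (machine P K S)) c d := by
    rintro ⟨p, σ⟩ ⟨p', σ'⟩ hs _ ⟨T, h, a, b, rfl, hT, hz, hb, rfl⟩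
    obtain ⟨T', h', b', hreach, hT', hz', hbb, hσ', hsame⟩ :=
      simulate (S := S) hP hT hz (hb b le_rfl) hs
    exact ⟨_, ⟨T', h', a, b', rfl, hT', hz', fun n hn => by rw [hsame n hn, hb n (by omega)],
      hσ'⟩, hreach⟩
  induction hxy with
  | single hs => exact one hs hc
  | tail _ hs ih =>
    obtain ⟨d, hd, hcd⟩ := ih
    obtain ⟨e, he, hde⟩ := one hs hd
    exact ⟨e, he, hcd.trans hde⟩

/-- A counter machine run returning forever to a set of configurations gives a Turing machine
run that never halts. -/
theorem not_halts {P : List (ℕ × Instr)} {K S : ℕ} (hP : Fits P K S) {A : Set (ℕ × (ℕ → ℕ))}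
    (hA : ∀ x ∈ A, ∃ y ∈ A, Relation.TransGen (CStep P) x y) {x : ℕ × (ℕ → ℕ)} (hx : x ∈ A)
    {c : Config} (hc : Represents K x.1 x.2 c) : ¬ HaltsOn (machine P K S) c := by
  refine not_haltsOn (wf_machine hP) (S := {c | ∃ x ∈ A, Represents K x.1 x.2 c}) ?_ ⟨x, hx, hc⟩
  rintro c ⟨x, hx, hc⟩
  obtain ⟨y, hy, hxy⟩ := hA x hx
  obtain ⟨d, hd, hcd⟩ := Represents.transGen hP hxy hc
  exact ⟨d, ⟨y, hy, hd⟩, hcd⟩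

/-! ### The reduction -/

/-- A `Σ⁰₁` condition is approximated by primitive recursive, increasing stages. -/
theorem exists_stages {p : ℕ → ℕ → ℕ → Bool}
    (hp : Computable fun x : ℕ × ℕ × ℕ => p x.1 x.2.1 x.2.2) :
    ∃ q : ℕ → ℕ → ℕ → ℕ,
      Nat.Primrec' (fun v : List.Vector ℕ 3 => q (v.get 0) (v.get 1) (v.get 2)) ∧
      (∀ n x t t', t ≤ t' → q n x t ≠ 0 → q n x t' ≠ 0) ∧
      ∀ n x, (∃ y, p n x y = true) ↔ ∃ t, q n x t ≠ 0 := by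
  let g : ℕ →. ℕ := fun m => Nat.rfind fun y => Part.some (p m.unpair.1 m.unpair.2 y)
  have hg : Nat.Partrec g := by
    have h1 : Computable fun z : ℕ × ℕ => (z.1.unpair.1, z.1.unpair.2, z.2) :=
      (Computable.fst.comp (Computable.unpair.comp Computable.fst)).pair
        ((Computable.snd.comp (Computable.unpair.comp Computable.fst)).pair Computable.snd)
    have h2 : Computable₂ fun m y : ℕ => p m.unpair.1 m.unpair.2 y := (hp.comp h1).of_eq
      fun _ => rfl
    exact Partrec.nat_iff.1 (Partrec.rfind h2.partrec₂)
  obtain ⟨c, hc⟩ := Nat.Partrec.Code.exists_code.1 hg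
  refine ⟨fun n x t => if (c.evaln t (Nat.pair n x)).isSome = true then 1 else 0, ?_, ?_, ?_⟩
  · refine Nat.Primrec'.of_prim ?_
    have get : ∀ i : Fin 3, Primrec fun v : List.Vector ℕ 3 => v.get i := fun i =>
      Primrec.vector_get.comp Primrec.id (Primrec.const i)
    refine Primrec.ite (PrimrecRel.comp Primrec.eq (Primrec.option_isSome.comp
      (Nat.Partrec.Code.primrec_evaln.comp (((get 2).pair (Primrec.const c)).pair
        (Primrec₂.natPair.comp (get 0) (get 1))))) (Primrec.const true))
      (Primrec.const 1) (Primrec.const 0)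
  · intro n x t t' htt h
    have h' : (c.evaln t (Nat.pair n x)).isSome = true := by
      by_contra hcon
      exact h (if_neg hcon)
    obtain ⟨y, hy⟩ := Option.isSome_iff_exists.1 h'
    have hy' := Nat.Partrec.Code.evaln_mono htt hy
    simp only [Option.mem_def] at hy'
    simp [hy']
  · intro n x
    have key : (∃ y, p n x y = true) ↔ ∃ y, y ∈ c.eval (Nat.pair n x) := by
      rw [hc]
      simp only [g, Nat.unpair_pair]
      rw [← Part.dom_iff_mem]
      refine ⟨fun ⟨y, hy⟩ => Nat.rfind_dom.2 ⟨y, by simp [hy], by simp⟩, fun h => ?_⟩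
      obtain ⟨y, hy, -⟩ := Nat.rfind_dom.1 h
      exact ⟨y, by simpa using hy⟩
    rw [key]
    constructor
    · rintro ⟨y, hy⟩
      obtain ⟨t, ht⟩ := Nat.Partrec.Code.evaln_complete.1 hy
      simp only [Option.mem_def] at ht
      exact ⟨t, by simp [ht]⟩
    · rintro ⟨t, ht⟩
      have h' : (c.evaln t (Nat.pair n x)).isSome = true := by
        by_contra hcon
        exact ht (if_neg hcon)
      obtain ⟨y, hy⟩ := Option.isSome_iff_exists.1 h'
      exact ⟨y, Nat.Partrec.Code.evaln_complete.2 ⟨t, hy⟩⟩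

theorem Instr.Bounded.mono {K S K' S' : ℕ} (hK : K ≤ K') (hS : S ≤ S') {i : Instr}
    (h : i.Bounded K S) : i.Bounded K' S' := by
  cases i <;> simp only [Instr.Bounded] at h ⊢ <;> omega

/-- Compiled code jumps at most to its exit label. -/
theorem exists_bounded (c : Prog) (o : ℕ) :
    ∃ K, ∀ e ∈ Prog.compile o c, e.2.Bounded K (o + c.len + 1) := by
  induction c generalizing o with
  | skip => exact ⟨0, by simp [Prog.compile]⟩
  | inc r => exact ⟨r + 1, by simp [Prog.compile, Instr.Bounded, Prog.len]⟩
  | seq c d ihc ihd =>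
    obtain ⟨K, hK⟩ := ihc o
    obtain ⟨K', hK'⟩ := ihd (o + c.len)
    refine ⟨max K K', fun e he => ?_⟩
    simp only [Prog.compile, List.mem_append] at he
    simp only [Prog.len]
    rcases he with he | he
    · exact (hK e he).mono (le_max_left _ _) (by omega)
    · exact (hK' e he).mono (le_max_right _ _) (by omega)
  | loop r c ih =>
    obtain ⟨K, hK⟩ := ih (o + 1)
    refine ⟨max (r + 1) K, fun e he => ?_⟩
    simp only [Prog.compile, List.mem_cons] at he
    simp only [Prog.len]
    rcases he with rfl | rfl | he
    · simp only [Instr.Bounded]; omega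
    · simp only [Instr.Bounded]; omega
    · exact (hK e he).mono (le_max_right _ _) (by omega)

/-- The counter machine that, holding `x` in register `1`, runs through all `t` in register `2` and
stops (at label `0`) once the result of `c` on `n`, `x`, `t`, found in register `3`, is nonzero. The
value `n` is restored in register `0` before every test, so that it is independent of the initial
register contents. -/
def searcher (c : Prog) (n : ℕ) : List (ℕ × Instr) :=
  Prog.compile 1 c ++
    ([(c.len + 1, .dec 3 0 (c.len + 2)), (c.len + 2, .dec 0 (c.len + 2) (c.len + 3))] ++
      ((List.range n).map (fun i => (c.len + 3 + i, .inc 0 (c.len + 4 + i))) ++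
        [(c.len + 3 + n, .inc 2 1)]))

theorem mem_searcher {c : Prog} {n : ℕ} {e : ℕ × Instr} : e ∈ searcher c n ↔
    e ∈ Prog.compile 1 c ∨ e = (c.len + 1, .dec 3 0 (c.len + 2)) ∨
      e = (c.len + 2, .dec 0 (c.len + 2) (c.len + 3)) ∨
      (∃ i < n, e = (c.len + 3 + i, .inc 0 (c.len + 4 + i))) ∨
      e = (c.len + 3 + n, .inc 2 1) := by
  simp only [searcher, List.mem_append, List.mem_cons, List.mem_map, List.mem_range,
    List.not_mem_nil, or_false, or_assoc, eq_comm (b := e)]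

theorem fits_searcher {c : Prog} {K : ℕ} (hK : 4 ≤ K)
    (hc : ∀ e ∈ Prog.compile 1 c, e.2.Bounded K (1 + c.len + 1)) (n : ℕ) :
    Fits (searcher c n) K (c.len + 4 + n) := by
  refine ⟨fun e he e' he' h => ?_, fun e he => ?_, fun e he => ?_, by omega⟩
  · rw [mem_searcher] at he he'
    rcases he with he | rfl | rfl | ⟨i, hi, rfl⟩ | rfl <;>
    rcases he' with he' | rfl | rfl | ⟨i', hi', rfl⟩ | rfl
    case inl.inl => exact Prog.label_inj he he' h
    case inr.inr.inr.inl.inr.inr.inr.inl =>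
      simp only at h
      obtain rfl : i = i' := by omega
      rfl
    all_goals first
      | rfl
      | (have := Prog.label_compile he; simp only at h; omega)
      | (have := Prog.label_compile he'; simp only at h; omega)
      | (simp only at h; omega)
  · rw [mem_searcher] at he
    rcases he with he | rfl | rfl | ⟨i, hi, rfl⟩ | rfl
    · have := Prog.label_compile he; omega
    all_goals simp only; omega
  · rw [mem_searcher] at he
    rcases he with he | rfl | rfl | ⟨i, hi, rfl⟩ | rfl
    · exact (hc e he).mono le_rfl (by omega)
    all_goals simp only [Instr.Bounded]; omega

/-- One round of the search, up to the next test. -/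
theorem searcher_round (c : Prog) (n : ℕ) (σ : ℕ → ℕ) :
    ∃ σ', Relation.TransGen (CStep (searcher c n)) (c.len + 2, σ) (1, σ') ∧ σ' 0 = n ∧
      σ' 1 = σ 1 ∧ σ' 2 = σ 2 + 1 := by
  have h1 : (c.len + 2, Instr.dec 0 (c.len + 2) (c.len + 3)) ∈ searcher c n :=
    mem_searcher.2 (by simp)
  have h2 : ∀ i < n, (c.len + 3 + i, Instr.inc 0 (c.len + 4 + i)) ∈ searcher c n :=
    fun i hi => mem_searcher.2 (.inr (.inr (.inr (.inl ⟨i, hi, rfl⟩))))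
  have h3 : (c.len + 3 + n, Instr.inc 2 1) ∈ searcher c n := mem_searcher.2 (by simp)
  have clear : ∀ k (σ : ℕ → ℕ), σ 0 = k → Relation.TransGen (CStep (searcher c n))
      (c.len + 2, σ) (c.len + 3, Function.update σ 0 0) := by
    intro k
    induction k with
    | zero =>
      intro σ hσ
      have e : Function.update σ 0 0 = σ := by
        rw [Function.update_eq_self_iff, hσ]
      rw [e]
      exact .single (.zero h1 hσ)
    | succ k ih =>
      intro σ hσ
      refine .head (.dec h1 (by omega)) ?_
      have := ih (Function.update σ 0 (σ 0 - 1)) (by simp [hσ])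
      rwa [Function.update_idem] at this
  have fill : ∀ i ≤ n, Reach (searcher c n) (c.len + 3, Function.update σ 0 0)
      (c.len + 3 + i, Function.update σ 0 i) := by
    intro i
    induction i with
    | zero => exact fun _ => .refl
    | succ i ih =>
      intro hi
      have := (ih (by omega)).tail (.inc (h2 i (by omega)))
      rw [Function.update_idem, Function.update_self] at this
      rwa [show c.len + 3 + (i + 1) = c.len + 4 + i by omega]
  exact ⟨_, .tail' ((clear _ σ rfl).to_reflTransGen.trans (fill n le_rfl)) (.inc h3),
    by simp, by simp, by simp⟩

section Search

variable {c : Prog} {q : ℕ → ℕ → ℕ → ℕ}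

/-- The test performed in each round. -/
theorem searcher_test (hc : c.Computes (m := 3)
      (fun v => q (v.get 0) (v.get 1) (v.get 2)) (fun i => i) 3 4) (n : ℕ) (σ : ℕ → ℕ) :
    ∃ σ', σ' 3 = q (σ 0) (σ 1) (σ 2) ∧ σ' 1 = σ 1 ∧ σ' 2 = σ 2 ∧
      Reach (searcher c n) (1, σ) (c.len + 1, σ') := by
  refine ⟨c.exec σ, ?_, hc.frame _ _ (by omega) (by omega), hc.frame _ _ (by omega) (by omega), ?_⟩
  · rw [hc.val]
    simp
  · rw [add_comm c.len 1]
    exact Prog.reach_exec hc.wf (fun e he => mem_searcher.2 (.inl he)) σ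

theorem test_mem (c : Prog) (n : ℕ) :
    (c.len + 1, Instr.dec 3 0 (c.len + 2)) ∈ searcher c n := mem_searcher.2 (by simp)

/-- If a witness exists for every `x`, the search stops from all labels and register contents. -/
theorem searcher_stops (hc : c.Computes (m := 3)
      (fun v => q (v.get 0) (v.get 1) (v.get 2)) (fun i => i) 3 4)
    (hq : ∀ n x t t', t ≤ t' → q n x t ≠ 0 → q n x t' ≠ 0) {n : ℕ}
    (hn : ∀ x, ∃ t, q n x t ≠ 0) (p : ℕ) (σ : ℕ → ℕ) :
    ∃ p' σ', Reach (searcher c n) (p, σ) (p', σ') ∧ ∀ i, (p', i) ∉ searcher c n := by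
  have h0 : ∀ i, (0, i) ∉ searcher c n := by
    intro i hi
    rw [mem_searcher] at hi
    rcases hi with hi | hi | hi | ⟨i, -, hi⟩ | hi
    · have := Prog.label_compile hi; simp only at this; omega
    all_goals simp only [Prod.mk.injEq] at hi; omega
  have round : ∀ k σ, q n (σ 1) (σ 2 + 1 + k) ≠ 0 →
      ∃ σ', Reach (searcher c n) (c.len + 2, σ) (0, σ') := by
    intro k
    induction k with
    | zero =>
      intro σ hσ
      obtain ⟨σ₁, r1, e0, e1, e2⟩ := searcher_round c n σ
      obtain ⟨σ₂, e3, -, -, r2⟩ := searcher_test hc n σ₁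
      rw [e0, e1, e2] at e3
      exact ⟨_, (r1.to_reflTransGen.trans r2).tail (.dec (test_mem c n) (by rwa [e3]))⟩
    | succ k ih =>
      intro σ hσ
      obtain ⟨σ₁, r1, e0, e1, e2⟩ := searcher_round c n σ
      obtain ⟨σ₂, e3, e4, e5, r2⟩ := searcher_test hc n σ₁
      have r3 := r1.to_reflTransGen.trans r2
      by_cases hz : σ₂ 3 = 0
      · obtain ⟨σ₃, r4⟩ := ih σ₂ (by
          rw [e4, e1, e5, e2]
          rwa [show σ 2 + 1 + 1 + k = σ 2 + 1 + (k + 1) by omega])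
        exact ⟨σ₃, (r3.tail (.zero (test_mem c n) hz)).trans r4⟩
      · exact ⟨_, r3.tail (.dec (test_mem c n) hz)⟩
  have fromRound : ∀ σ, ∃ σ', Reach (searcher c n) (c.len + 2, σ) (0, σ') := by
    intro σ
    obtain ⟨t, ht⟩ := hn (σ 1)
    exact round t σ (hq _ _ _ _ (by omega) ht)
  have fromTest : ∀ σ, ∃ σ', Reach (searcher c n) (c.len + 1, σ) (0, σ') := by
    intro σ
    by_cases hz : σ 3 = 0
    · obtain ⟨σ', h'⟩ := fromRound σ
      exact ⟨σ', .head (.zero (test_mem c n) hz) h'⟩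
    · exact ⟨_, .single (.dec (test_mem c n) hz)⟩
  have fromOne : ∀ σ, ∃ σ', Reach (searcher c n) (1, σ) (0, σ') := by
    intro σ
    obtain ⟨σ₁, -, -, -, r1⟩ := searcher_test hc n σ
    obtain ⟨σ₂, r2⟩ := fromTest σ₁
    exact ⟨σ₂, r1.trans r2⟩
  have fromFill : ∀ k σ i, i + k = n → ∃ σ', Reach (searcher c n) (c.len + 3 + i, σ) (0, σ') := by
    intro k
    induction k with
    | zero =>
      intro σ i hi
      obtain rfl : i = n := by omega
      obtain ⟨σ', h'⟩ := fromOne (Function.update σ 2 (σ 2 + 1))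
      exact ⟨σ', .head (.inc (mem_searcher.2 (by simp))) h'⟩
    | succ k ih =>
      intro σ i hi
      obtain ⟨σ', h'⟩ := ih (Function.update σ 0 (σ 0 + 1)) (i + 1) (by omega)
      rw [show c.len + 3 + (i + 1) = c.len + 4 + i by omega] at h'
      exact ⟨σ', .head (.inc (mem_searcher.2 (.inr (.inr (.inr (.inl ⟨i, by omega, rfl⟩)))))) h'⟩
  by_cases hp : ∃ i, (p, i) ∈ searcher c n
  swap
  · exact ⟨p, σ, .refl, not_exists.1 hp⟩
  suffices ∃ σ', Reach (searcher c n) (p, σ) (0, σ') by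
    obtain ⟨σ', h'⟩ := this
    exact ⟨0, σ', h', h0⟩
  obtain ⟨i, hi⟩ := hp
  rw [mem_searcher] at hi
  rcases hi with hi | hi | hi | ⟨i, hin, hi⟩ | hi
  · obtain ⟨h1, h2⟩ := Prog.label_compile hi
    obtain ⟨σ₁, r1⟩ := Prog.reach_exit hc.wf (P := searcher c n)
      (fun e he => mem_searcher.2 (.inl he)) h1 h2 σ
    rw [add_comm 1 c.len] at r1
    obtain ⟨σ₂, r2⟩ := fromTest σ₁
    exact ⟨σ₂, r1.trans r2⟩
  · cases hi; exact fromTest σ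
  · cases hi; exact fromRound σ
  · cases hi; exact fromFill (n - i) σ i (by omega)
  · cases hi; exact fromFill 0 σ n rfl

/-- If some `x` has no witness, the simulating Turing machine runs forever on the tape holding `x`
units of register `1`. -/
theorem searcher_runs (hc : c.Computes (m := 3)
      (fun v => q (v.get 0) (v.get 1) (v.get 2)) (fun i => i) 3 4) {K : ℕ} (hK : 4 ≤ K)
    {n S x : ℕ} (hS : c.len + 2 < S) (hP : Fits (searcher c n) K S) (hx : ∀ t, q n x t = 0) :
    ∃ d, ValidConfig (machine (searcher c n) K S) d ∧
      ¬ HaltsOn (machine (searcher c n) K S) d := by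
  let T : ℤ → ℕ := fun m => if 0 ≤ m ∧ m < x then 3 else 0
  have hT : ∀ m, T m < K + 2 := by
    intro m
    simp only [T]
    split_ifs <;> omega
  refine ⟨conf (3 * (c.len + 2)) T 0, ⟨?_, ?_, ?_⟩, ?_⟩
  · simp only [conf, machine, List.mem_range]
    omega
  · intro m
    exact List.mem_range.2 (hT _)
  · refine (Set.finite_Ico (0 : ℤ) x).subset fun m hm => ?_
    by_contra hcon
    refine hm ?_
    simp only [conf, machine, T, add_zero]
    exact if_neg hcon
  · refine not_halts hP (A := {y | y.1 = c.len + 2 ∧ y.2 1 = x}) ?_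
      (x := (c.len + 2, regs T (-1) x)) ⟨rfl, ?_⟩ ⟨T, 0, -1, x, rfl, hT, ⟨by omega, by omega, ?_,
        fun m hm hm' => ?_⟩, fun m hm => ?_, rfl⟩
    · rintro ⟨_, σ⟩ ⟨rfl, hσ⟩
      replace hσ : σ 1 = x := hσ
      obtain ⟨σ₁, r1, e0, e1, e2⟩ := searcher_round c n σ
      obtain ⟨σ₂, e3, e4, e5, r2⟩ := searcher_test hc n σ₁
      rw [e0, e1, hσ, hx] at e3
      exact ⟨(c.len + 2, σ₂), ⟨rfl, (e4.trans e1).trans hσ⟩,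
        (r1.trans_left r2).tail (.zero (test_mem c n) e3)⟩
    · change ((Finset.Ioo (-1 : ℤ) x).filter fun m => T m = 1 + 2).card = x
      rw [Finset.filter_true_of_mem, Int.card_Ioo]
      · omega
      · intro m hm
        rw [Finset.mem_Ioo] at hm
        exact if_pos ⟨by omega, hm.2⟩
    · exact if_neg (by omega)
    · simp only [T]
      rw [if_pos ⟨by omega, hm'⟩]
      omega
    · exact if_neg (by omega)

end Search

theorem primrec_trans_inc {α : Type*} [Primcodable α] (K r : ℕ) {f g : α → ℕ} (hf : Primrec f)
    (hg : Primrec g) : Primrec fun x => trans K (f x, .inc r (g x)) := by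
  have three : ∀ {β : Type _} [Primcodable β] {f : β → ℕ}, Primrec f →
      Primrec fun x => 3 * f x := fun h => Primrec.nat_mul.comp (Primrec.const 3) h
  refine Primrec.list_flatMap (Primrec.const (List.range 3)) ?_
  refine Primrec.list_map (Primrec.const (List.range (K + 2))) ?_
  have h1 : Primrec fun y : (α × ℕ) × ℕ => 3 * f y.1.1 :=
    three (hf.comp (Primrec.fst.comp Primrec.fst))
  have h2 : Primrec fun y : (α × ℕ) × ℕ => 3 * g y.1.1 :=
    three (hg.comp (Primrec.fst.comp Primrec.fst))
  exact ((Primrec.nat_add.comp h1 (Primrec.snd.comp Primrec.fst)).pair Primrec.snd).pair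
    (Primrec.ite (PrimrecRel.comp Primrec.eq Primrec.snd (Primrec.const 0))
      (h2.pair ((Primrec.const (r + 2)).pair (Primrec.const true)))
      (h1.pair (Primrec.snd.pair (Primrec.const true))))

theorem primrec_encode_machine (c : Prog) (K : ℕ) :
    Primrec fun n => encodeTM (machine (searcher c n) K (c.len + 4 + n)) := by
  have hadd : ∀ {α : Type} [Primcodable α] (k : ℕ) {f : α → ℕ}, Primrec f →
      Primrec fun x => k + f x := fun k _ h => Primrec.nat_add.comp (Primrec.const k) h
  have hdelta : Primrec fun n => (machine (searcher c n) K (c.len + 4 + n)).delta := by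
    simp only [machine, searcher, List.flatMap_append, List.flatMap_map]
    refine Primrec.list_append.comp (Primrec.const _) (Primrec.list_append.comp (Primrec.const _)
      (Primrec.list_append.comp (Primrec.list_flatMap Primrec.list_range ?_) ?_))
    · exact primrec_trans_inc K 0 (hadd _ Primrec.snd) (hadd _ Primrec.snd)
    · simp only [List.flatMap_cons, List.flatMap_nil, List.append_nil]
      exact primrec_trans_inc K 2 (hadd _ Primrec.id) (Primrec.const 1)
  exact Primrec.encode.comp ((Primrec.list_range.comp (Primrec.nat_mul.comp (Primrec.const 3)
    (hadd _ Primrec.id))).pair ((Primrec.const (List.range (K + 2))).pair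
      ((Primrec.const 0).pair ((Primrec.const 0).pair hdelta))))

theorem encodeTM_injective : Function.Injective encodeTM := by
  rintro ⟨a, b, c, d, e⟩ ⟨a', b', c', d', e'⟩ h
  have := Encodable.encode_injective h
  simp only [Prod.mk.injEq] at this
  obtain ⟨rfl, rfl, rfl, rfl, rfl⟩ := this
  rfl

/-- The uniform halting problem is `Π⁰₂`-hard. The program `c` and the number of
registers depend only on `B`; the instance `n` only determines how often register `0` is
incremented in each round. -/
theorem hard {B : Set ℕ} (hB : Pi02 B) : ManyOneRed B { n : ℕ | ∃ M : TM, WFTM M ∧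
    n = encodeTM M ∧ ∀ c : Config, ValidConfig M c → HaltsOn M c } := by
  obtain ⟨p, hp, hpB⟩ := hB
  obtain ⟨q, hq, hmono, hpq⟩ := exists_stages hp
  obtain ⟨c, hc⟩ := Prog.exists_computes hq (fun i => i) 3 4 (fun i => by omega)
    (fun i => by omega) (by omega)
  obtain ⟨K₀, hK₀⟩ := exists_bounded c 1
  have hfits := fits_searcher (K := max 4 K₀) (le_max_left _ _)
    fun e he => (hK₀ e he).mono (le_max_right _ _) le_rfl
  refine ⟨_, (primrec_encode_machine c (max 4 K₀)).to_comp, fun n => ?_⟩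
  rw [hpB]
  simp only [hpq]
  constructor
  · exact fun hn => ⟨_, wf_machine (hfits n), rfl, fun d hd =>
      halts_all (hfits n) (searcher_stops hc hmono hn) hd⟩
  · rintro ⟨M, -, hM, hall⟩ x
    rw [← encodeTM_injective hM] at hall
    by_contra! hx
    obtain ⟨d, hd, hnot⟩ := searcher_runs hc (le_max_left _ _) (by omega) (hfits n) hx
    exact hnot (hall d hd)

end UniformHalting

/-- The uniform halting problem — the set of codes of Turing machines that
halt on every (valid) configuration — is Π⁰₂-complete. -/
theorem uniform_halting_Pi02Complete :
    Pi02Complete { n : ℕ | ∃ M : TM, WFTM M ∧ n = encodeTM M ∧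
      ∀ c : Config, ValidConfig M c → HaltsOn M c } := by
  exact ⟨UniformHalting.pi02_uniform, fun _ hB => UniformHalting.hard hB⟩
end

section
/- For the TRS A_pickn the following two properties hold: (i) for every n ∈ ℕ, pickn →* ok(Sⁿ(0(▷))); and (ii) whenever pickn →* ok(t) for some term t, then t = Sⁿ(0(▷)) for some n ∈ ℕ. -/
/-!
For (i), induction on `n`: one extra `fc` at the start gives one extra `S` at the end, through
`pickn → fc(pickn) →* fc(ok(Sⁿ(0(▷)))) → ok(Sⁿ⁺¹(0(▷)))`.

For (ii), the set of terms of the form `fcᵏ(pickn)` or `fcᵏ(ok(Sⁿ(0(▷))))` (`Reachable`) contains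
`pickn` and is closed under rewriting (`Reachable.step`), because `Sⁿ(0(▷))` is a normal form
(`numTerm_normal`). The only members of this set with root `ok` are the terms `ok(Sⁿ(0(▷)))`.
-/

/-- First-order terms over the fixed countably infinite set of variables
(named by naturals): a term is a variable or a function symbol (named by a
natural number) applied to a list of argument terms. -/
inductive Term : Type
  | var : ℕ → Term
  | app : ℕ → List Term → Term

namespace Term

/-- Homomorphic application of a substitution (a map from variables to terms). -/
def subst (σ : ℕ → Term) : Term → Term
  | var n => σ n
  | app f ts => app f (ts.attach.map (fun x => subst σ x.1))
decreasing_by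
  have := List.sizeOf_lt_of_mem x.2
  simp only [Term.app.sizeOf_spec]; omega

end Term

/-- The one-step rewrite relation `→_R` of a TRS `R`: application of a rule
under a substitution, closed under arbitrary one-hole contexts. -/
inductive Rewrite (R : List (Term × Term)) : Term → Term → Prop
  | rule (l r : Term) (σ : ℕ → Term) (h : (l, r) ∈ R) :
      Rewrite R (l.subst σ) (r.subst σ)
  | congr (f : ℕ) (ts₁ ts₂ : List Term) (t t' : Term) (h : Rewrite R t t') :
      Rewrite R (.app f (ts₁ ++ t :: ts₂)) (.app f (ts₁ ++ t' :: ts₂))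

/-- Many-step rewriting `→*_R` (reflexive-transitive closure of `→_R`). -/
def Reduces (R : List (Term × Term)) : Term → Term → Prop :=
  Relation.ReflTransGen (Rewrite R)

/-! The signature of the TRS `A_pickn`: a constant `pickn`, unary symbols
`fc`, `ok`, `S`, `0` and a constant `▷`. -/

/-- The constant `pickn`. -/
def pickn : Term := .app 0 []
/-- The unary symbol `fc`. -/
def fc (t : Term) : Term := .app 1 [t]
/-- The unary symbol `ok`. -/
def ok (t : Term) : Term := .app 2 [t]
/-- The unary symbol `S` (successor). -/
def sS (t : Term) : Term := .app 3 [t]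
/-- The unary symbol `0` (zero). -/
def z (t : Term) : Term := .app 4 [t]
/-- The constant `▷`. -/
def tri : Term := .app 5 []

/-- The TRS `A_pickn` with rules
`pickn → fc(pickn)`, `pickn → ok(0(▷))` and `fc(ok(x)) → ok(S(x))`. -/
def Apickn : List (Term × Term) :=
  [(pickn, fc pickn), (pickn, ok (z tri)), (fc (ok (.var 0)), ok (sS (.var 0)))]

/-- The term `Sⁿ(0(▷))`. -/
def numTerm : ℕ → Term
  | 0 => z tri
  | n + 1 => sS (numTerm n)

theorem rewrite_pickn_fc : Rewrite Apickn pickn (fc pickn) := by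
  simpa [pickn, fc, Term.subst] using
    Rewrite.rule (R := Apickn) pickn (fc pickn) Term.var (by simp [Apickn])

theorem rewrite_pickn_ok : Rewrite Apickn pickn (ok (z tri)) := by
  simpa [pickn, ok, z, tri, Term.subst] using
    Rewrite.rule (R := Apickn) pickn (ok (z tri)) Term.var (by simp [Apickn])

theorem rewrite_fc_ok (u : Term) : Rewrite Apickn (fc (ok u)) (ok (sS u)) := by
  simpa [fc, ok, sS, Term.subst] using
    Rewrite.rule (R := Apickn) (fc (ok (.var 0))) (ok (sS (.var 0))) (fun _ => u)
      (by simp [Apickn])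

theorem Reduces.fc_congr {s t : Term} (h : Reduces Apickn s t) :
    Reduces Apickn (fc s) (fc t) :=
  Relation.ReflTransGen.lift fc (fun a b hab => Rewrite.congr 1 [] [] a b hab) _ _ h

/-- Inversion of a rewrite step: it is a root step with one of the three rules, or a step in an
argument. -/
theorem rewrite_inv {s t : Term} (h : Rewrite Apickn s t) :
    (s = pickn ∧ (t = fc pickn ∨ t = ok (z tri))) ∨
    (∃ u, s = fc (ok u) ∧ t = ok (sS u)) ∨
    (∃ f ts₁ ts₂ u u', s = .app f (ts₁ ++ u :: ts₂) ∧ t = .app f (ts₁ ++ u' :: ts₂) ∧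
      Rewrite Apickn u u') := by
  cases h with
  | rule l r σ h =>
    simp only [Apickn, List.mem_cons, Prod.mk.injEq, List.not_mem_nil, or_false] at h
    rcases h with ⟨rfl, rfl⟩ | ⟨rfl, rfl⟩ | ⟨rfl, rfl⟩
    · left; simp [pickn, fc, Term.subst]
    · left; simp [pickn, ok, z, tri, Term.subst]
    · right; left
      exact ⟨σ 0, by simp [fc, ok, Term.subst], by simp [ok, sS, Term.subst]⟩
  | congr f ts₁ ts₂ u u' h => exact .inr (.inr ⟨f, ts₁, ts₂, u, u', rfl, rfl, h⟩)

theorem rewrite_pickn_inv {t : Term} (h : Rewrite Apickn pickn t) :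
    t = fc pickn ∨ t = ok (z tri) := by
  rcases rewrite_inv h with ⟨_, h⟩ | ⟨u, h, _⟩ | ⟨f, ts₁, ts₂, u, u', h, _⟩
  · exact h
  · simp [pickn, fc] at h
  · simp [pickn] at h

theorem not_rewrite_tri {t : Term} : ¬ Rewrite Apickn tri t := by
  intro h
  rcases rewrite_inv h with ⟨h, _⟩ | ⟨u, h, _⟩ | ⟨f, ts₁, ts₂, u, u', h, _⟩
  · simp [tri, pickn] at h
  · simp [tri, fc] at h
  · simp [tri] at h

/-- A step from a unary term is a root step with `fc(ok(x)) → ok(S(x))` or a step in its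
argument. -/
theorem rewrite_unary_inv {f : ℕ} {a t : Term} (h : Rewrite Apickn (.app f [a]) t) :
    (f = 1 ∧ ∃ u, a = ok u ∧ t = ok (sS u)) ∨
    ∃ a', t = .app f [a'] ∧ Rewrite Apickn a a' := by
  rcases rewrite_inv h with ⟨h, _⟩ | ⟨u, h, ht⟩ | ⟨g, ts₁, ts₂, u, u', h, ht, hu⟩
  · simp [pickn] at h
  · simp only [fc, Term.app.injEq, List.cons.injEq, and_true] at h
    exact .inl ⟨h.1, u, h.2, ht⟩
  · right
    obtain ⟨rfl, h⟩ := Term.app.inj h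
    rcases ts₁ with _ | ⟨b, ts₁⟩
    · simp only [List.nil_append] at h
      obtain ⟨rfl, rfl⟩ := h
      exact ⟨u', ht, hu⟩
    · simp at h

theorem numTerm_normal (n : ℕ) {t : Term} : ¬ Rewrite Apickn (numTerm n) t := by
  induction n generalizing t with
  | zero =>
    intro h
    rcases rewrite_unary_inv h with ⟨h, _⟩ | ⟨a, _, h⟩
    · simp at h
    · exact not_rewrite_tri h
  | succ n ih =>
    intro h
    rcases rewrite_unary_inv h with ⟨h, _⟩ | ⟨a, _, h⟩
    · simp at h
    · exact ih h

/-- The terms `fcᵏ(pickn)` and `fcᵏ(ok(Sⁿ(0(▷))))`, a set of terms containing every reduct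
of `pickn`. -/
inductive Reachable : Term → Prop
  | pickn : Reachable pickn
  | ok (n : ℕ) : Reachable (ok (numTerm n))
  | fc {t : Term} (h : Reachable t) : Reachable (fc t)

theorem Reachable.exists_numTerm {t : Term} (h : Reachable (_root_.ok t)) :
    ∃ n, t = numTerm n := by
  generalize hs : _root_.ok t = s at h
  cases h with
  | pickn => simp [_root_.ok, _root_.pickn] at hs
  | ok n => exact ⟨n, by simpa [_root_.ok] using hs⟩
  | fc h => simp [_root_.ok, _root_.fc] at hs

theorem Reachable.step {s t : Term} (hs : Reachable s) (h : Rewrite Apickn s t) :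
    Reachable t := by
  induction hs generalizing t with
  | pickn =>
    rcases rewrite_pickn_inv h with rfl | rfl
    · exact .fc .pickn
    · exact .ok 0
  | ok n =>
    rcases rewrite_unary_inv h with ⟨h, _⟩ | ⟨a, _, h⟩
    · simp at h
    · exact absurd h (numTerm_normal n)
  | fc hs ih =>
    rcases rewrite_unary_inv h with ⟨_, u, rfl, rfl⟩ | ⟨a, rfl, ha⟩
    · obtain ⟨n, rfl⟩ := hs.exists_numTerm
      exact .ok (n + 1)
    · exact .fc (ih ha)

/-- The TRS `A_pickn` satisfies: (i) `pickn →* ok(Sⁿ(0(▷)))` for every `n ∈ ℕ`,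
and (ii) whenever `pickn →* ok(t)`, then `t = Sⁿ(0(▷))` for some `n ∈ ℕ`. -/
theorem apickn_spec :
    (∀ n : ℕ, Reduces Apickn pickn (ok (numTerm n))) ∧
    (∀ t : Term, Reduces Apickn pickn (ok t) → ∃ n : ℕ, t = numTerm n) := by
  refine ⟨fun n => ?_, fun t h => ?_⟩
  · induction n with
    | zero => exact .single rewrite_pickn_ok
    | succ n ih =>
      exact .head rewrite_pickn_fc (.tail ih.fc_congr (rewrite_fc_ok _))
  · have reachable : ∀ s, Reduces Apickn pickn s → Reachable s := by
      intro s hs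
      induction hs with
      | refl => exact .pickn
      | tail _ h ih => exact ih.step h
    exact (reachable _ h).exists_numTerm
end
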